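/- Let n ≥ 3 and let f ∈ Out(F_n) have order 2. Assume that f cannot be lifted to a finite order element of Aut(F_n), i.e., no element of Aut(F_n) of finite order projects to f under the quotient map Aut(F_n) → Out(F_n). Then N(f) = SOut(F_n) if det(ρ̄(f)) = 1, and N(f) = Out(F_n) if det(ρ̄(f)) = −1. -/

import Mathlib

open Matrix

namespace NormalClosurePaper

/-- The automorphism group of the free group on `n` generators. -/
abbrev FrAut (n : ℕ) := MulAut (FreeGroup (Fin n))

/-- Exponent sum of the generator `x_i` in a word of the free group. -/
def expSum {n : ℕ} (i : Fin n) : FreeGroup (Fin n) →* Multiplicative ℤ :=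
  FreeGroup.lift fun j => Multiplicative.ofAdd (if j = i then (1 : ℤ) else 0)

/-- The abelianized matrix of an automorphism of the free group:
the `(i, j)` entry is the exponent sum of `x_i` in `f x_j`. -/
def mat {n : ℕ} (f : FrAut n) : Matrix (Fin n) (Fin n) ℤ :=
  Matrix.of fun i j => (expSum i (f (FreeGroup.of j))).toAdd

lemma expSum_apply {n : ℕ} (f : FrAut n) (i : Fin n) (w : FreeGroup (Fin n)) :
    (expSum i (f w)).toAdd = ∑ k, mat f i k * (expSum k w).toAdd := by
  induction w using FreeGroup.induction_on with
  | C1 => simp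
  | of j =>
      have h : (expSum i (f (FreeGroup.of j))).toAdd = mat f i j := rfl
      rw [h]
      simp [expSum, mul_ite, Finset.sum_ite_eq]
  | inv_of j ih =>
      simp only [_root_.map_inv, toAdd_inv, mul_neg, Finset.sum_neg_distrib, ih]
  | mul x y ihx ihy =>
      simp only [_root_.map_mul, toAdd_mul, mul_add, Finset.sum_add_distrib, ihx, ihy]

lemma mat_one {n : ℕ} : mat (1 : FrAut n) = 1 := by
  ext i j
  simp [mat, expSum, Matrix.one_apply, eq_comm]

lemma mat_mul {n : ℕ} (f g : FrAut n) : mat (f * g) = mat f * mat g := by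
  ext i j
  rw [Matrix.mul_apply]
  show (expSum i ((f * g) (FreeGroup.of j))).toAdd = _
  rw [show (f * g) (FreeGroup.of j) = f (g (FreeGroup.of j)) from rfl, expSum_apply]
  rfl

/-- The matrix of the induced map on the abelianization, as a monoid homomorphism. -/
def matHom (n : ℕ) : FrAut n →* Matrix (Fin n) (Fin n) ℤ where
  toFun := mat
  map_one' := mat_one
  map_mul' := mat_mul

/-- The homomorphism `Aut(F_n) → GL_n(ℤ)` induced by abelianization. -/
def ρ (n : ℕ) : FrAut n →* GL (Fin n) ℤ := (matHom n).toHomUnits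

/-- The composition of `ρ` with the determinant. -/
def detρ (n : ℕ) : FrAut n →* ℤˣ := (Matrix.GeneralLinearGroup.det).comp (ρ n)

/-- The special automorphism group `SAut(F_n)`: automorphisms whose induced matrix
has determinant `1`. -/
def SAut (n : ℕ) : Subgroup (FrAut n) := (detρ n).ker

/-- The Torelli subgroup `IA_n`, the kernel of `ρ`. -/
def IA (n : ℕ) : Subgroup (FrAut n) := (ρ n).ker

/-- The group of inner automorphisms of the free group. -/
def Inn (n : ℕ) : Subgroup (FrAut n) := (MulAut.conj (G := FreeGroup (Fin n))).range

instance Inn_normal (n : ℕ) : (Inn n).Normal := by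
  constructor
  rintro - ⟨a, rfl⟩ g
  refine ⟨g a, ?_⟩
  ext y
  simp [MulAut.conj_apply, MulAut.mul_apply, _root_.map_mul, _root_.map_inv]

/-- The outer automorphism group `Out(F_n)`. -/
abbrev OutF (n : ℕ) := FrAut n ⧸ Inn n

/-- The projection `Aut(F_n) → Out(F_n)`. -/
def toOut (n : ℕ) : FrAut n →* OutF n := QuotientGroup.mk' (Inn n)

lemma mat_conj {n : ℕ} (g : FreeGroup (Fin n)) : mat (MulAut.conj g) = 1 := by
  rw [← mat_one (n := n)]
  ext i j
  simp only [mat, Matrix.of_apply, MulAut.conj_apply, MulAut.one_apply, _root_.map_mul,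
    _root_.map_inv, toAdd_mul, toAdd_inv]
  omega

lemma ρ_conj {n : ℕ} (g : FreeGroup (Fin n)) : ρ n (MulAut.conj g) = 1 :=
  Units.ext (mat_conj g)

/-- The homomorphism `Out(F_n) → GL_n(ℤ)` induced by abelianization. -/
def ρOut (n : ℕ) : OutF n →* GL (Fin n) ℤ :=
  QuotientGroup.lift (Inn n) (ρ n) (by rintro - ⟨g, rfl⟩; exact ρ_conj g)

/-- The composition of `ρOut` with the determinant. -/
def detρOut (n : ℕ) : OutF n →* ℤˣ := (Matrix.GeneralLinearGroup.det).comp (ρOut n)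

/-- The special outer automorphism group `SOut(F_n)`. -/
def SOut (n : ℕ) : Subgroup (OutF n) := (detρOut n).ker

/-- Entrywise reduction `GL_n(ℤ) → GL_n(ℤ/ℓℤ)`. -/
def redGL (n ℓ : ℕ) : GL (Fin n) ℤ →* GL (Fin n) (ZMod ℓ) :=
  Units.map (RingHom.mapMatrix (Int.castRingHom (ZMod ℓ))).toMonoidHom

/-- The subgroup `GΓ_n(ℓ)` of `GL_n(ℤ)` of matrices congruent to the identity mod `ℓ`. -/
def GGamma (n ℓ : ℕ) : Subgroup (GL (Fin n) ℤ) := (redGL n ℓ).ker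

/-- The level `ℓ` congruence subgroup `Γ_n(ℓ)` (viewed inside `GL_n(ℤ)`): matrices with
determinant `1` that are congruent to the identity mod `ℓ`. -/
def GammaGL (n ℓ : ℕ) : Subgroup (GL (Fin n) ℤ) :=
  GGamma n ℓ ⊓ (Matrix.GeneralLinearGroup.det).ker

/-- Reduction `SL_n(ℤ) → SL_n(ℤ/ℓℤ)`. -/
def redSL (n ℓ : ℕ) : Matrix.SpecialLinearGroup (Fin n) ℤ →*
    Matrix.SpecialLinearGroup (Fin n) (ZMod ℓ) :=
  Matrix.SpecialLinearGroup.map (Int.castRingHom (ZMod ℓ))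

/-- Projection `SL_n(ℤ/ℓℤ) → PSL_n(ℤ/ℓℤ)`. -/
def projPSL (n ℓ : ℕ) : Matrix.SpecialLinearGroup (Fin n) (ZMod ℓ) →*
    Matrix.ProjectiveSpecialLinearGroup (Fin n) (ZMod ℓ) :=
  QuotientGroup.mk' _

/-!
Let `E` be the group of lifts to `Aut(F_n)` of powers of `f`. It contains `Inn(F_n) ≅ F_n` with
index two, and it is torsion-free since `f` has no lift of finite order. By Stallings' theorem `E`
is free: a minimal cut of its Cayley graph yields an action on a tree, hence a free product
splitting, and one inducts on the number of homomorphisms to a finite group. A basis of `E`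
can be chosen with a single letter `x` outside `Inn(F_n)`; rewriting gives a basis `z, aᵢ, bᵢ` of
`F_n`, with `z` playing the role of `x²`, in which `x` acts as `z ↦ z`, `aᵢ ↦ bᵢ`,
`bᵢ ↦ z aᵢ z⁻¹`. Commutators of this lift of `f` with transvections produce a transvection in the
preimage of `N(f)`, and a normal subgroup containing one transvection contains the kernel of the
determinant by Nielsen's theorem.
-/

open scoped Pointwise

/-! ### Cuts of Cayley graphs -/

section Cuts

variable {G : Type*} [Group G]

/-- The edges of the Cayley graph of `G` with respect to `S` that leave `A`, an edge from `x` to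
`x * s` being encoded as `(x, s)`. -/
def edgeBoundary (S A : Set G) : Set (G × G) :=
  {p | p.2 ∈ S ∧ p.1 ∈ A ∧ p.1 * p.2 ∉ A}

/-- A subset of a group that contains almost all points of each of its right translates. -/
def IsAlmostInvariant (A : Set G) : Prop :=
  ∀ g, {x | x ∈ A ∧ x * g ∉ A}.Finite

/-- A cut of the Cayley graph: a set of vertices with finite boundary, infinite on both sides. -/
structure IsCut (S A : Set G) : Prop where
  finite : (edgeBoundary S A).Finite
  infinite : A.Infinite
  infinite_compl : Aᶜ.Infinite

/-- A cut whose boundary has the least possible number of edges. -/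
structure IsThinCut (S A : Set G) : Prop extends IsCut S A where
  ncard_le : ∀ B, IsCut S B → (edgeBoundary S A).ncard ≤ (edgeBoundary S B).ncard

variable {S A B : Set G}

lemma edgeBoundary_compl (hSinv : ∀ s ∈ S, s⁻¹ ∈ S) :
    edgeBoundary S Aᶜ = (fun p : G × G => (p.1 * p.2, p.2⁻¹)) '' edgeBoundary S A := by
  ext ⟨x, s⟩
  simp only [edgeBoundary, Set.mem_ofPred_eq, Set.mem_compl_iff, not_not, Set.mem_image,
    Prod.mk.injEq, Prod.exists]
  constructor
  · rintro ⟨hs, hx, hxs⟩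
    exact ⟨x * s, s⁻¹, ⟨hSinv s hs, hxs, by simpa using hx⟩, by simp, by simp⟩
  · rintro ⟨y, t, ⟨ht, hy, hyt⟩, rfl, rfl⟩
    exact ⟨hSinv t ht, hyt, by simpa using hy⟩

lemma ncard_edgeBoundary_compl (hSinv : ∀ s ∈ S, s⁻¹ ∈ S) :
    (edgeBoundary S Aᶜ).ncard = (edgeBoundary S A).ncard := by
  rw [edgeBoundary_compl hSinv]
  apply Set.ncard_image_of_injective
  rintro ⟨x, s⟩ ⟨y, t⟩ h
  simp only [Prod.mk.injEq, _root_.inv_inj] at h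
  obtain ⟨hxy, rfl⟩ := h
  simpa using hxy

lemma edgeBoundary_smul (g : G) :
    edgeBoundary S (g • A) = (fun p : G × G => (g * p.1, p.2)) '' edgeBoundary S A := by
  ext ⟨x, s⟩
  simp only [edgeBoundary, Set.mem_ofPred_eq, Set.mem_smul_set_iff_inv_smul_mem, smul_eq_mul,
    Set.mem_image, Prod.mk.injEq, Prod.exists]
  constructor
  · rintro ⟨hs, hx, hxs⟩
    exact ⟨g⁻¹ * x, s, ⟨hs, hx, by simpa [mul_assoc] using hxs⟩, by simp, rfl⟩
  · rintro ⟨y, t, ⟨ht, hy, hyt⟩, rfl, rfl⟩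
    exact ⟨ht, by simpa using hy, by simpa [mul_assoc] using hyt⟩

lemma ncard_edgeBoundary_smul (g : G) :
    (edgeBoundary S (g • A)).ncard = (edgeBoundary S A).ncard := by
  rw [edgeBoundary_smul]
  apply Set.ncard_image_of_injective
  rintro ⟨x, s⟩ ⟨y, t⟩ h
  simpa using h

lemma edgeBoundary_inter_subset :
    edgeBoundary S (A ∩ B) ⊆ edgeBoundary S A ∪ edgeBoundary S B := by
  rintro ⟨x, s⟩ ⟨hs, ⟨hxA, hxB⟩, hxs⟩
  by_cases h : x * s ∈ A
  · exact Or.inr ⟨hs, hxB, fun h' => hxs ⟨h, h'⟩⟩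
  · exact Or.inl ⟨hs, hxA, h⟩

lemma edgeBoundary_union_subset :
    edgeBoundary S (A ∪ B) ⊆ edgeBoundary S A ∪ edgeBoundary S B := by
  rintro ⟨x, s⟩ ⟨hs, hx | hx, hxs⟩
  · exact Or.inl ⟨hs, hx, fun h => hxs (Or.inl h)⟩
  · exact Or.inr ⟨hs, hx, fun h => hxs (Or.inr h)⟩

lemma ncard_edgeBoundary_inter_add_union_le (hA : (edgeBoundary S A).Finite)
    (hB : (edgeBoundary S B).Finite) :
    (edgeBoundary S (A ∩ B)).ncard + (edgeBoundary S (A ∪ B)).ncard ≤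
      (edgeBoundary S A).ncard + (edgeBoundary S B).ncard := by
  have hAB := hA.union hB
  rw [← Set.ncard_union_add_ncard_inter _ _ (hAB.subset edgeBoundary_inter_subset)
      (hAB.subset edgeBoundary_union_subset), ← Set.ncard_union_add_ncard_inter _ _ hA hB]
  refine add_le_add (Set.ncard_le_ncard (Set.union_subset edgeBoundary_inter_subset
    edgeBoundary_union_subset) hAB) (Set.ncard_le_ncard ?_ (hA.inter_of_left _))
  rintro ⟨x, s⟩ ⟨⟨hs, ⟨hxA, hxB⟩, -⟩, -, -, hxs⟩
  exact ⟨⟨hs, hxA, fun h => hxs (Or.inl h)⟩, ⟨hs, hxB, fun h => hxs (Or.inr h)⟩⟩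

lemma edgeBoundary_nonempty (hS : Subgroup.closure S = ⊤) (hSinv : ∀ s ∈ S, s⁻¹ ∈ S)
    (hA : A.Nonempty) (hA' : A ≠ Set.univ) : (edgeBoundary S A).Nonempty := by
  by_contra hne
  have mul_mem : ∀ s ∈ S, ∀ x ∈ A, x * s ∈ A := fun s hs x hx => by
    by_contra h
    exact hne ⟨(x, s), hs, hx, h⟩
  have mul_mem_of_closure : ∀ g ∈ Subgroup.closure S, ∀ x ∈ A, x * g ∈ A := by
    intro g hg
    induction hg using Subgroup.closure_induction'' with
    | mem s hs => exact mul_mem s hs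
    | inv_mem s hs => exact mul_mem _ (hSinv s hs)
    | one => simp
    | mul g h _ _ ihg ihh => exact fun x hx => by rw [← mul_assoc]; exact ihh _ (ihg x hx)
  obtain ⟨a, ha⟩ := hA
  refine hA' (Set.eq_univ_of_forall fun g => ?_)
  simpa using mul_mem_of_closure (a⁻¹ * g) (by simp [hS]) a ha

lemma IsAlmostInvariant.isCut (hA : IsAlmostInvariant A) (hS : S.Finite) (hinf : A.Infinite)
    (hinf' : Aᶜ.Infinite) : IsCut S A where
  finite := (hS.biUnion fun s _ => (hA s).image fun x => (x, s)).subset fun p hp =>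
    Set.mem_biUnion hp.1 ⟨p.1, hp.2, rfl⟩
  infinite := hinf
  infinite_compl := hinf'

lemma IsCut.isAlmostInvariant (hS : Subgroup.closure S = ⊤) (hSinv : ∀ s ∈ S, s⁻¹ ∈ S)
    (hA : IsCut S A) : IsAlmostInvariant A := by
  intro g
  have finite_of_mem : ∀ s ∈ S, {x | x ∈ A ∧ x * s ∉ A}.Finite := fun s hs =>
    (hA.finite.image Prod.fst).subset fun x hx => ⟨(x, s), ⟨hs, hx.1, hx.2⟩, rfl⟩
  have hg : g ∈ Subgroup.closure S := by simp [hS]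
  induction hg using Subgroup.closure_induction'' with
  | mem s hs => exact finite_of_mem s hs
  | inv_mem s hs => exact finite_of_mem _ (hSinv s hs)
  | one => simp
  | mul g h _ _ ihg ihh =>
    refine (ihg.union (ihh.preimage (mul_left_injective g).injOn)).subset ?_
    rintro x ⟨hx, hxgh⟩
    by_cases hxg : x * g ∈ A
    · exact Or.inr ⟨hxg, by rwa [mul_assoc]⟩
    · exact Or.inl ⟨hx, hxg⟩

lemma exists_isThinCut (h : ∃ A, IsCut S A) : ∃ A, IsThinCut S A := by
  obtain ⟨A, hA, hmin⟩ := WellFounded.has_min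
    (measure fun A : Set G => (edgeBoundary S A).ncard).wf {A | IsCut S A} h
  exact ⟨A, hA, fun B hB => not_lt.1 (hmin B hB)⟩

namespace IsThinCut

lemma compl (hSinv : ∀ s ∈ S, s⁻¹ ∈ S) (hA : IsThinCut S A) : IsThinCut S Aᶜ where
  finite := by rw [edgeBoundary_compl hSinv]; exact hA.finite.image _
  infinite := hA.infinite_compl
  infinite_compl := by simpa using hA.infinite
  ncard_le := by rw [ncard_edgeBoundary_compl hSinv]; exact hA.ncard_le

lemma smul (hA : IsThinCut S A) (g : G) : IsThinCut S (g • A) where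
  finite := by rw [edgeBoundary_smul]; exact hA.finite.image _
  infinite := hA.infinite.smul_set
  infinite_compl := by rw [← Set.smul_set_compl]; exact hA.infinite_compl.smul_set
  ncard_le := by rw [ncard_edgeBoundary_smul]; exact hA.ncard_le

-- Submodularity of the boundary: `A ∪ B` is a cut as well, so neither can beat the minimum.
lemma inter (hA : IsThinCut S A) (hB : IsThinCut S B) (hinter : (A ∩ B).Infinite)
    (hunion : (A ∪ B)ᶜ.Infinite) : IsThinCut S (A ∩ B) := by
  have hAB := hA.finite.union hB.finite
  have cut_union : IsCut S (A ∪ B) := ⟨hAB.subset edgeBoundary_union_subset,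
    hinter.mono (Set.inter_subset_left.trans Set.subset_union_left), hunion⟩
  refine ⟨⟨hAB.subset edgeBoundary_inter_subset, hinter,
    hunion.mono (Set.compl_subset_compl.2
      (Set.inter_subset_left.trans Set.subset_union_left))⟩, fun C hC => ?_⟩
  have := ncard_edgeBoundary_inter_add_union_le hA.finite hB.finite
  have := hA.ncard_le _ cut_union
  have := hB.ncard_le _ hC
  omega

-- Otherwise `T` and `A \ T` split the boundary of `A` into two smaller boundaries, and one of
-- them is a cut.
lemma eq_of_subset_of_connected (hS : Subgroup.closure S = ⊤) (hSinv : ∀ s ∈ S, s⁻¹ ∈ S)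
    (hA : IsThinCut S A) {T : Set G} (hTA : T ⊆ A) (hT : T.Nonempty)
    (hclosed : ∀ x ∈ T, ∀ s ∈ S, x * s ∈ A → x * s ∈ T) : T = A := by
  by_contra hne
  have hdiff : (A \ T).Nonempty := Set.sdiff_nonempty.2 fun h => hne (hTA.antisymm h)
  have ne_univ : ∀ X ⊆ A, X ≠ Set.univ := by
    rintro X hX rfl
    exact hA.infinite_compl (by simp [Set.univ_subset_iff.1 hX])
  have subT : edgeBoundary S T ⊆ edgeBoundary S A := fun p ⟨hs, hx, hxs⟩ =>
    ⟨hs, hTA hx, fun h => hxs (hclosed p.1 hx p.2 hs h)⟩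
  have subD : edgeBoundary S (A \ T) ⊆ edgeBoundary S A := by
    rintro ⟨x, s⟩ ⟨hs, hx, hxs⟩
    refine ⟨hs, hx.1, fun h => hxs ⟨h, fun h' => hx.2 ?_⟩⟩
    simpa using hclosed _ h' s⁻¹ (hSinv s hs) (by simpa using hx.1)
  have hdisj : Disjoint (edgeBoundary S T) (edgeBoundary S (A \ T)) :=
    Set.disjoint_left.2 fun p hp hp' => hp'.2.1.2 hp.2.1
  have finT := hA.finite.subset subT
  have finD := hA.finite.subset subD
  have hcard : (edgeBoundary S T).ncard + (edgeBoundary S (A \ T)).ncard ≤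
      (edgeBoundary S A).ncard := by
    rw [← Set.ncard_union_eq hdisj finT finD]
    exact Set.ncard_le_ncard (Set.union_subset subT subD) hA.finite
  have posT := (Set.ncard_pos finT).2 (edgeBoundary_nonempty hS hSinv hT (ne_univ _ hTA))
  have posD := (Set.ncard_pos finD).2
    (edgeBoundary_nonempty hS hSinv hdiff (ne_univ _ Set.sdiff_subset))
  by_cases hfin : T.Finite
  · have := hA.ncard_le (A \ T) ⟨finD, hA.infinite.sdiff hfin,
      hA.infinite_compl.mono (Set.compl_subset_compl.2 Set.sdiff_subset)⟩
    omega
  · have := hA.ncard_le T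
      ⟨finT, hfin, hA.infinite_compl.mono (Set.compl_subset_compl.2 hTA)⟩
    omega

lemma exists_mem_edgeBoundary (hS : Subgroup.closure S = ⊤) (hSinv : ∀ s ∈ S, s⁻¹ ∈ S)
    (hA : IsThinCut S A) (h : (A ∩ B).Nonempty) (h' : (A ∩ Bᶜ).Nonempty) :
    ∃ p ∈ edgeBoundary S B, p.1 ∈ A := by
  by_contra! hcon
  have hAB : A ∩ B = A := hA.eq_of_subset_of_connected hS hSinv Set.inter_subset_left h
    fun x hx s hs hxs => ⟨hxs, by
      by_contra hxsB
      exact hcon (x, s) ⟨hs, hx.2, hxsB⟩ hx.1⟩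
  obtain ⟨y, hyA, hyB⟩ := h'
  exact hyB (Set.inter_eq_left.1 hAB hyA)

end IsThinCut

lemma exists_mem_subset_edgeBoundary_of_isChain {c : Set (Set G)} (hchain : IsChain (· ⊆ ·) c)
    (hne : c.Nonempty) {F : Finset (G × G)} (hF : (F : Set (G × G)) ⊆ edgeBoundary S (⋂₀ c)) :
    ∃ A ∈ c, (F : Set (G × G)) ⊆ edgeBoundary S A := by
  let leaving : Set G → Set (G × G) := fun A => edgeBoundary S (⋂₀ c) ∩ edgeBoundary S A
  have leaving_anti : ∀ {X Y}, X ∈ c → X ⊆ Y → leaving Y ⊆ leaving X := fun hX hXY p hp =>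
    ⟨hp.1, hp.1.1, hp.1.2.1 _ hX, fun h => hp.2.2.2 (hXY h)⟩
  have hdir : DirectedOn (fun A B => leaving A ⊆ leaving B) c := by
    intro A hA B hB
    rcases hchain.total hA hB with h | h
    · exact ⟨A, hA, subset_rfl, leaving_anti hA h⟩
    · exact ⟨B, hB, leaving_anti hB h, subset_rfl⟩
  obtain ⟨A, hA, hFA⟩ := hdir.exists_mem_subset_of_finset_subset_biUnion hne
    (s := F) fun p hp => by
      obtain ⟨A, hA, hpA⟩ : ∃ A ∈ c, p.1 * p.2 ∉ A := by simpa using (hF hp).2.2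
      exact Set.mem_biUnion hA ⟨hF hp, (hF hp).1, (hF hp).2.1 A hA, hpA⟩
  exact ⟨A, hA, fun p hp => (hFA hp).2⟩

-- The boundary of the intersection has at most as many edges as a thin cut, so it is already
-- contained in the boundary of one member of the chain.
lemma exists_forall_subset_of_isChain (hS : Subgroup.closure S = ⊤) (hSinv : ∀ s ∈ S, s⁻¹ ∈ S)
    {c : Set (Set G)} (hthin : ∀ A ∈ c, IsThinCut S A) (hone : ∀ A ∈ c, 1 ∈ A)
    (hchain : IsChain (· ⊆ ·) c) (hne : c.Nonempty) : ∃ A ∈ c, ∀ B ∈ c, A ⊆ B := by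
  have hfin : (edgeBoundary S (⋂₀ c)).Finite := by
    by_contra hinf
    obtain ⟨A, hA⟩ := hne
    obtain ⟨F, hF, hcard⟩ := Set.Infinite.exists_subset_card_eq hinf
      ((edgeBoundary S A).ncard + 1)
    obtain ⟨B, hB, hFB⟩ := exists_mem_subset_edgeBoundary_of_isChain hchain ⟨A, hA⟩ hF
    have := Set.ncard_le_ncard hFB (hthin B hB).finite
    rw [Set.ncard_coe_finset, hcard] at this
    have := (hthin B hB).ncard_le A (hthin A hA).toIsCut
    omega
  obtain ⟨A, hA, hFA⟩ := exists_mem_subset_edgeBoundary_of_isChain hchain hne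
    (S := S) (F := hfin.toFinset) (by simp)
  rw [hfin.coe_toFinset] at hFA
  have hsInter : ⋂₀ c = A := (hthin A hA).eq_of_subset_of_connected hS hSinv
    (Set.sInter_subset_of_mem hA) ⟨1, hone⟩ fun x hx s hs hxs => by
      by_contra h
      exact (hFA (show (x, s) ∈ edgeBoundary S (⋂₀ c) from ⟨hs, hx, h⟩)).2.2 hxs
  exact ⟨A, hA, fun B hB => hsInter ▸ Set.sInter_subset_of_mem hB⟩

lemma exists_minimal_isThinCut (hS : Subgroup.closure S = ⊤) (hSinv : ∀ s ∈ S, s⁻¹ ∈ S)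
    (h : ∃ A, IsCut S A) : ∃ A, Minimal (fun A => IsThinCut S A ∧ 1 ∈ A) A := by
  obtain ⟨A₀, hA₀⟩ := exists_isThinCut h
  obtain ⟨a, ha⟩ := hA₀.infinite.nonempty
  obtain ⟨A, -, hA⟩ := zorn_superset_nonempty {A | IsThinCut S A ∧ (1 : G) ∈ A}
    (fun c hc hchain hne => by
      obtain ⟨A, hA, hAB⟩ := exists_forall_subset_of_isChain hS hSinv
        (fun A hA => (hc hA).1) (fun A hA => (hc hA).2) hchain hne
      exact ⟨A, hc hA, hAB⟩)
    (a⁻¹ • A₀) ⟨hA₀.smul _, by simpa [Set.mem_smul_set_iff_inv_smul_mem] using ha⟩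
  exact ⟨A, hA⟩

lemma finite_corner_of_minimal (hA : Minimal (fun A => IsThinCut S A ∧ 1 ∈ A) A)
    (hB : IsThinCut S B) (hone : 1 ∈ B) :
    (A ∩ B).Finite ∨ (A ∩ Bᶜ).Finite ∨ (Aᶜ ∩ Bᶜ).Finite := by
  by_contra! hcon
  obtain ⟨hinter, hdiff, hcompl⟩ := hcon
  have hAB : A ⊆ A ∩ B := hA.2 ⟨hA.1.1.inter hB hinter
    (by simpa [Set.compl_union] using hcompl), hA.1.2, hone⟩ Set.inter_subset_left
  have : A ∩ Bᶜ = ∅ := Set.sdiff_eq_empty.2 (hAB.trans Set.inter_subset_right)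
  exact hdiff (by simp [this])

/-- A nontrivial almost invariant set each of whose translates is almost equal to a set nested
with it, and crossed by only finitely many of its translates. -/
structure IsNestedCut (A : Set G) : Prop where
  isAlmostInvariant : IsAlmostInvariant A
  infinite : A.Infinite
  infinite_compl : Aᶜ.Infinite
  nested : ∀ g : G, (A ∩ g • A).Finite ∨ (A ∩ (g • A)ᶜ).Finite ∨ (Aᶜ ∩ g • A).Finite ∨
    (Aᶜ ∩ (g • A)ᶜ).Finite
  finite_crossing : {g : G | (A ∩ g • A).Nonempty ∧ (A ∩ (g • A)ᶜ).Nonempty ∧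
    (Aᶜ ∩ g • A).Nonempty ∧ (Aᶜ ∩ (g • A)ᶜ).Nonempty}.Finite

-- If `g • A` crosses `A`, then both sides of `A` meet an edge in the boundary of `g • A`.
lemma IsThinCut.finite_crossing (hS : Subgroup.closure S = ⊤) (hSinv : ∀ s ∈ S, s⁻¹ ∈ S)
    (hA : IsThinCut S A) : {g : G | (A ∩ g • A).Nonempty ∧ (A ∩ (g • A)ᶜ).Nonempty ∧
      (Aᶜ ∩ g • A).Nonempty ∧ (Aᶜ ∩ (g • A)ᶜ).Nonempty}.Finite := by
  have hV : (Prod.fst '' edgeBoundary S A).Finite := hA.finite.image _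
  have finite_separating : ∀ x y : G, {g : G | g * x ∈ A ∧ g * y ∉ A}.Finite := fun x y => by
    refine ((hA.toIsCut.isAlmostInvariant hS hSinv (x⁻¹ * y)).preimage
      (mul_left_injective x).injOn).subset fun g ⟨hgx, hgy⟩ => ⟨hgx, ?_⟩
    simpa [mul_assoc] using hgy
  refine ((hV.prod hV).biUnion fun p _ => finite_separating p.1 p.2).subset ?_
  rintro g ⟨hpp, hpm, hmp, hmm⟩
  obtain ⟨p, hp, hpA⟩ := hA.exists_mem_edgeBoundary hS hSinv hpp hpm
  obtain ⟨q, hq, hqA⟩ := (hA.compl hSinv).exists_mem_edgeBoundary hS hSinv hmp hmm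
  rw [edgeBoundary_smul] at hp hq
  obtain ⟨p, hp, rfl⟩ := hp
  obtain ⟨q, hq, rfl⟩ := hq
  exact Set.mem_biUnion (x := (p.1, q.1)) ⟨⟨p, hp, rfl⟩, ⟨q, hq, rfl⟩⟩ ⟨hpA, hqA⟩

theorem exists_isNestedCut (hS : Subgroup.closure S = ⊤) (hSinv : ∀ s ∈ S, s⁻¹ ∈ S)
    (h : ∃ A, IsCut S A) : ∃ A : Set G, IsNestedCut A := by
  obtain ⟨A, hA⟩ := exists_minimal_isThinCut hS hSinv h
  have hthin := hA.1.1
  refine ⟨A, hthin.toIsCut.isAlmostInvariant hS hSinv, hthin.infinite, hthin.infinite_compl,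
    fun g => ?_, hthin.finite_crossing hS hSinv⟩
  by_cases hg : 1 ∈ g • A
  · rcases finite_corner_of_minimal hA (hthin.smul g) hg with h | h | h <;> simp [h]
  · rcases finite_corner_of_minimal hA ((hthin.smul g).compl hSinv) hg with h | h | h
    · simp [h]
    all_goals rw [compl_compl] at h; simp [h]

end Cuts

section FreeProduct

lemma three_le_mk_of_torsionFree {H : Type*} [Group H] [Nontrivial H]
    (htf : ∀ h : H, IsOfFinOrder h → h = 1) : 3 ≤ Cardinal.mk H := by
  obtain ⟨h, hh⟩ := exists_ne (1 : H)
  have : Infinite H := Infinite.of_injective _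
    (injective_zpow_iff_not_isOfFinOrder.2 fun h' => hh (htf h h'))
  exact (Cardinal.natCast_lt_aleph0 (n := 3)).le.trans (Cardinal.aleph0_le_mk H)

/-- The group is the internal free product of the two subgroups `H true` and `H false`. -/
def IsFreeProduct {G : Type*} [Group G] (H : Bool → Subgroup G) : Prop :=
  Function.Bijective (Monoid.CoprodI.lift fun i => (H i).subtype)

lemma isFreeProduct_of_ping_pong {G E : Type*} [Group G] [MulAction G E]
    (htf : ∀ g : G, IsOfFinOrder g → g = 1) {H : Bool → Subgroup G}
    (hbot : H true ≠ ⊥) (hgen : H true ⊔ H false = ⊤) {X : Bool → Set E}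
    (hX : ∀ i, (X i).Nonempty) (hdisj : Disjoint (X true) (X false))
    (hpp : ∀ i, ∀ h ∈ H i, h ≠ 1 → ∀ x ∈ X (!i), h • x ∈ X i) : IsFreeProduct H := by
  constructor
  · have := (Subgroup.nontrivial_iff_ne_bot _).2 hbot
    refine Monoid.CoprodI.lift_injective_of_ping_pong _ (Or.inr ⟨true, three_le_mk_of_torsionFree
      fun k hk => Subtype.ext (htf k (Submonoid.isOfFinOrder_coe.2 hk))⟩) X hX ?_ ?_
    · rintro (_ | _) (_ | _) hij
      exacts [absurd rfl hij, hdisj.symm, hdisj, absurd rfl hij]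
    · rintro i j hij h hh _ ⟨x, hx, rfl⟩
      obtain rfl : j = !i := by cases i <;> cases j <;> simp_all
      exact hpp i h h.2 (by simpa using hh) x hx
  · rw [← MonoidHom.range_eq_top, eq_top_iff, ← hgen, sup_le_iff]
    exact ⟨fun x hx => ⟨Monoid.CoprodI.of (i := true) ⟨x, hx⟩, by simp⟩,
      fun x hx => ⟨Monoid.CoprodI.of (i := false) ⟨x, hx⟩, by simp⟩⟩

end FreeProduct

/-! ### Groups acting on trees -/

/-- The oriented edges of a tree, ordered by inclusion of the half-trees they point into, together
with an action of `G` without inversions that is free and transitive on unoriented edges, and such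
that no vertex has valence one. The last condition is that there are edges strictly below `base`
and below its reversal. -/
structure TreeOrder (G E : Type*) [Group G] [PartialOrder E] [MulAction G E] where
  /-- Reversal of the orientation of an edge. -/
  star : E → E
  /-- The base edge. -/
  base : E
  star_star : ∀ e, star (star e) = e
  star_le_star : ∀ {e f}, e ≤ f → star f ≤ star e
  smul_le_smul : ∀ (g : G) {e f : E}, e ≤ f → g • e ≤ g • f
  smul_star : ∀ (g : G) e, g • star e = star (g • e)
  not_le_star : ∀ {x e}, x ≤ e → ¬ x ≤ star e
  nested : ∀ e f, e ≤ f ∨ e ≤ star f ∨ star e ≤ f ∨ star e ≤ star f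
  finite_Icc : ∀ e f : E, (Set.Icc e f).Finite
  exists_smul : ∀ e, ∃ g : G, e = g • base ∨ e = g • star base
  eq_one_of_smul : ∀ g : G, g • base = base → g = 1
  smul_ne_star : ∀ g : G, g • base ≠ star base
  exists_lt : ∃ x, x < base
  exists_lt_star : ∃ x, x < star base

namespace TreeOrder

variable {G E : Type*} [Group G] [PartialOrder E] [MulAction G E] (T : TreeOrder G E)

section Order

lemma le_star_comm {e f : E} : e ≤ T.star f ↔ f ≤ T.star e :=
  ⟨fun h => by simpa [T.star_star] using T.star_le_star h,
    fun h => by simpa [T.star_star] using T.star_le_star h⟩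

lemma star_le_star_iff {e f : E} : T.star e ≤ T.star f ↔ f ≤ e := by
  rw [T.le_star_comm, T.star_star]

lemma star_lt_star_iff {e f : E} : T.star e < T.star f ↔ f < e := by
  simp only [lt_iff_le_not_ge, T.star_le_star_iff]

lemma lt_star_comm {e f : E} : e < T.star f ↔ f < T.star e := by
  rw [← T.star_lt_star_iff, T.star_star]

lemma star_covBy_star {e f : E} (h : e ⋖ f) : T.star f ⋖ T.star e := by
  refine ⟨T.star_lt_star_iff.2 h.lt, fun x hfx hxe => h.2 (c := T.star x) (T.lt_star_comm.1 hxe) ?_⟩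
  rwa [← T.star_lt_star_iff, T.star_star]

lemma smul_lt_smul (T : TreeOrder G E) (g : G) {e f : E} (h : e < f) : g • e < g • f :=
  lt_of_le_of_ne (T.smul_le_smul g h.le) fun h' => h.ne (smul_left_cancel g h')

lemma smul_covBy_smul (T : TreeOrder G E) (g : G) {e f : E} (h : e ⋖ f) : g • e ⋖ g • f :=
  ⟨T.smul_lt_smul g h.lt, fun x hex hxf => h.2 (c := g⁻¹ • x)
    (by simpa using T.smul_lt_smul g⁻¹ hex) (by simpa using T.smul_lt_smul g⁻¹ hxf)⟩

lemma eq_one_of_smul_star (g : G) (h : g • T.star T.base = T.star T.base) : g = 1 :=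
  T.eq_one_of_smul g (by rw [T.smul_star] at h; simpa [T.star_star] using congrArg T.star h)

end Order

/-- Two oriented edges emanate from the same vertex. -/
def Adj (e f : E) : Prop := e = f ∨ e ⋖ T.star f

namespace Adj

variable {T}

lemma symm {e f : E} (h : T.Adj e f) : T.Adj f e := by
  rcases h with rfl | h
  · exact Or.inl rfl
  · exact Or.inr (by simpa [T.star_star] using T.star_covBy_star h)

lemma smul (g : G) {e f : E} (h : T.Adj e f) : T.Adj (g • e) (g • f) := by
  rcases h with rfl | h
  · exact Or.inl rfl
  · exact Or.inr (by rw [← T.smul_star]; exact T.smul_covBy_smul g h)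

lemma lt_star {e f : E} (h : T.Adj e f) (hne : e ≠ f) : e < T.star f :=
  (h.resolve_left hne).lt

lemma not_le_of_le {e f x : E} (h : T.Adj e f) (hne : e ≠ f) (hx : x ≤ f) : ¬ x ≤ e :=
  fun hxe => T.not_le_star hx (hxe.trans (h.lt_star hne).le)

lemma lt_star_of_ne {e f k : E} (hef : T.Adj e f) (hfk : T.Adj f k) (hne : e ≠ k) :
    e < T.star k := by
  rcases hef with rfl | hef
  · exact hfk.lt_star hne
  rcases hfk with rfl | hfk
  · exact hef.lt
  rcases T.nested e k with h | h | h | h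
  · exact absurd (T.lt_star_comm.1 hfk.lt) (hef.2 (lt_of_le_of_ne h hne))
  · refine lt_of_le_of_ne h ?_
    rintro rfl
    exact T.not_le_star (T.star_star k ▸ T.le_star_comm.1 hef.le) hfk.le
  · have hfe : f ≤ e := T.star_le_star_iff.1 (h.trans (T.lt_star_comm.1 hfk.lt).le)
    exact absurd (hfe.trans hef.le) (T.not_le_star le_rfl)
  · have hkf : k ⋖ T.star f := T.star_star k ▸ T.star_covBy_star hfk
    exact absurd hef.lt (hkf.2 (lt_of_le_of_ne (T.star_le_star_iff.1 h) hne.symm))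

lemma trans {e f k : E} (hef : T.Adj e f) (hfk : T.Adj f k) : T.Adj e k := by
  by_cases hne : e = k
  · exact Or.inl hne
  refine Or.inr ⟨hef.lt_star_of_ne hfk hne, fun x hex hxk => ?_⟩
  rcases hef with rfl | hef
  · exact (hfk.resolve_left hne).2 hex hxk
  rcases hfk with rfl | hfk
  · exact hef.2 hex hxk
  have not_ef : ¬ e ≤ f := fun h => T.not_le_star h hef.le
  have not_kf : ¬ k ≤ f := fun h => T.not_le_star h (T.lt_star_comm.1 hfk.lt).le
  have hkx : k ≤ T.star x := T.le_star_comm.1 hxk.le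
  rcases T.nested x f with h | h | h | h
  · exact not_ef (hex.le.trans h)
  · rcases h.eq_or_lt with rfl | h
    · exact not_kf (hkx.trans (T.star_star f).le)
    · exact hef.2 hex h
  · exact not_kf (hkx.trans h)
  · rcases (T.star_le_star_iff.1 h).eq_or_lt with rfl | h
    · exact not_ef hex.le
    · exact hfk.2 h hxk

end Adj

/-- The stabilizer of the vertex from which the edge `e` emanates. -/
def vertexStab (e : E) : Subgroup G where
  carrier := {g | T.Adj (g • e) e}
  one_mem' := Or.inl (one_smul _ _)
  mul_mem' {g h} hg hh := by
    have := Adj.smul g (show T.Adj (h • e) e from hh)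
    rw [smul_smul] at this
    exact this.trans hg
  inv_mem' {g} hg := by
    have := (Adj.smul g⁻¹ (show T.Adj (g • e) e from hg)).symm
    rwa [inv_smul_smul] at this

section EdgeOrbit

/-- The translates of the base edge and of its reversal under a subgroup. -/
def edgeOrbit (H : Subgroup G) : Set E :=
  {x | ∃ h ∈ H, x = h • T.base ∨ x = h • T.star T.base}

variable {T} {H : Subgroup G}

lemma star_mem_edgeOrbit {x : E} : T.star x ∈ T.edgeOrbit H ↔ x ∈ T.edgeOrbit H := by
  have star_mem : ∀ {x}, x ∈ T.edgeOrbit H → T.star x ∈ T.edgeOrbit H := by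
    rintro x ⟨h, hh, rfl | rfl⟩
    · exact ⟨h, hh, Or.inr (T.smul_star _ _).symm⟩
    · exact ⟨h, hh, Or.inl (by rw [T.smul_star, T.star_star])⟩
  exact ⟨fun h => T.star_star x ▸ star_mem h, star_mem⟩

/-- The subgroup contains the elements moving the base edge, possibly after reversal of either
edge, to an edge emanating from the same vertex. -/
structure ContainsAdjacent (T : TreeOrder G E) (H : Subgroup G) : Prop where
  vertexStab_base_le : T.vertexStab T.base ≤ H
  vertexStab_star_base_le : T.vertexStab (T.star T.base) ≤ H
  mem_of_adj : ∀ g : G, T.Adj (g • T.base) (T.star T.base) → g ∈ H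

lemma mem_edgeOrbit_of_adj (hH : T.ContainsAdjacent H) {x y : E} (hxy : T.Adj x y)
    (hy : y ∈ T.edgeOrbit H) : x ∈ T.edgeOrbit H := by
  obtain ⟨h, hh, hy⟩ := hy
  obtain ⟨k, hk⟩ := T.exists_smul (h⁻¹ • x)
  have eq_mul_smul : ∀ {b}, h⁻¹ • x = k • b → x = (h * k) • b := fun e => by
    rw [mul_smul, ← e, smul_inv_smul]
  have hxy' := hxy.smul h⁻¹
  rcases hy with rfl | rfl <;> rcases hk with hk | hk <;> rw [hk, inv_smul_smul] at hxy'
  · exact ⟨h * k, H.mul_mem hh (hH.vertexStab_base_le hxy'), Or.inl (eq_mul_smul hk)⟩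
  · have hk' := (hxy'.smul k⁻¹).symm
    rw [inv_smul_smul] at hk'
    exact ⟨h * k, H.mul_mem hh (by simpa using hH.mem_of_adj _ hk'), Or.inr (eq_mul_smul hk)⟩
  · exact ⟨h * k, H.mul_mem hh (hH.mem_of_adj _ hxy'), Or.inl (eq_mul_smul hk)⟩
  · exact ⟨h * k, H.mul_mem hh (hH.vertexStab_star_base_le hxy'), Or.inr (eq_mul_smul hk)⟩

lemma mem_edgeOrbit_iff_of_le (hH : T.ContainsAdjacent H) {x y : E} (hxy : x ≤ y) :
    x ∈ T.edgeOrbit H ↔ y ∈ T.edgeOrbit H := by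
  have mem_iff_of_covBy : ∀ {x y}, x ⋖ y → (x ∈ T.edgeOrbit H ↔ y ∈ T.edgeOrbit H) := by
    intro x y hxy
    have hxy' : T.Adj x (T.star y) := Or.inr (by rwa [T.star_star])
    rw [← star_mem_edgeOrbit (x := y)]
    exact ⟨mem_edgeOrbit_of_adj hH hxy'.symm, mem_edgeOrbit_of_adj hH hxy'⟩
  let _ : LocallyFiniteOrder E := LocallyFiniteOrder.ofFiniteIcc T.finite_Icc
  rw [le_iff_reflTransGen_covBy] at hxy
  induction hxy with
  | refl => rfl
  | tail _ h ih => exact ih.trans (mem_iff_of_covBy h)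

lemma ContainsAdjacent.eq_top (hH : T.ContainsAdjacent H) : H = ⊤ := by
  have base_mem : T.base ∈ T.edgeOrbit H := ⟨1, H.one_mem, Or.inl (one_smul _ _).symm⟩
  have mem_orbit : ∀ x, x ∈ T.edgeOrbit H := by
    intro x
    rcases T.nested x T.base with h | h | h | h <;>
      simpa only [star_mem_edgeOrbit, base_mem, iff_true] using mem_edgeOrbit_iff_of_le hH h
  rw [eq_top_iff]
  rintro g -
  obtain ⟨h, hh, hg | hg⟩ := mem_orbit (g • T.base)
  · have := T.eq_one_of_smul (h⁻¹ * g) (by rw [mul_smul, hg, inv_smul_smul])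
    rwa [inv_mul_eq_one.1 this] at hh
  · exact absurd (show (h⁻¹ * g) • T.base = _ by rw [mul_smul, hg, inv_smul_smul])
      (T.smul_ne_star _)

end EdgeOrbit

section Loop

variable {T} {s : G} (hs : T.Adj (s • T.base) (T.star T.base))
include hs

lemma smul_base_lt : s • T.base < T.base := by
  simpa only [T.star_star] using hs.lt_star (T.smul_ne_star s)

lemma pow_smul_base_le (n : ℕ) : s ^ n • T.base ≤ T.base := by
  induction n with
  | zero => simp
  | succ n ih =>
    rw [pow_succ', mul_smul]
    exact (T.smul_le_smul s ih).trans (smul_base_lt hs).le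

lemma inv_pow_smul_star_base_le (n : ℕ) : (s ^ n)⁻¹ • T.star T.base ≤ T.star T.base := by
  rw [T.smul_star, T.star_le_star_iff]
  simpa using T.smul_le_smul (s ^ n)⁻¹ (pow_smul_base_le hs n)

lemma adj_inv_smul_star_base : T.Adj (s⁻¹ • T.star T.base) T.base := by
  simpa using (hs.smul s⁻¹).symm

lemma vertexStab_sup_zpowers : T.vertexStab T.base ⊔ Subgroup.zpowers s = ⊤ := by
  have s_mem : s ∈ T.vertexStab T.base ⊔ Subgroup.zpowers s :=
    Subgroup.mem_sup_right (Subgroup.mem_zpowers s)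
  have mem_of_adj : ∀ g : G, T.Adj (g • T.base) (T.star T.base) →
      g ∈ T.vertexStab T.base ⊔ Subgroup.zpowers s := by
    intro g hg
    have hsg := (hg.trans hs.symm).smul s⁻¹
    rw [inv_smul_smul, smul_smul] at hsg
    rw [← mul_inv_cancel_left s g]
    exact Subgroup.mul_mem _ s_mem (Subgroup.mem_sup_left hsg)
  refine ContainsAdjacent.eq_top ⟨le_sup_left, fun g hg => ?_, mem_of_adj⟩
  have hgs : T.Adj ((g * s) • T.base) (T.star T.base) := by
    rw [mul_smul]
    exact (hs.smul g).trans hg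
  simpa using Subgroup.mul_mem _ (mem_of_adj _ hgs) (Subgroup.inv_mem _ s_mem)

/-- The half-trees at the base vertex along the axis of `s`: the base edge and
`s⁻¹ • star base`. -/
def axisHalfTrees (T : TreeOrder G E) (s : G) : Set E :=
  lowerClosure {T.base, s⁻¹ • T.star T.base}

/-- The half-trees at the base vertex off the axis of `s`. -/
def offAxisHalfTrees (T : TreeOrder G E) (s : G) : Set E :=
  lowerClosure {c | T.Adj c T.base ∧ c ≠ T.base ∧ c ≠ s⁻¹ • T.star T.base}

lemma disjoint_offAxisHalfTrees : Disjoint (T.offAxisHalfTrees s) (T.axisHalfTrees s) := by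
  rw [Set.disjoint_left]
  rintro x ⟨c, ⟨hc, hne, hne'⟩, hxc⟩ ⟨_, rfl | rfl, hx⟩
  · exact hc.not_le_of_le hne hx hxc
  · exact (hc.trans (adj_inv_smul_star_base hs).symm).not_le_of_le hne' hx hxc

lemma smul_mem_offAxisHalfTrees {h : G} (hh : h ∈ T.vertexStab T.base) (hne : h ≠ 1) {x : E}
    (hx : x ∈ T.axisHalfTrees s) : h • x ∈ T.offAxisHalfTrees s := by
  have smul_base_ne : ∀ g : G, g • T.base ≠ s⁻¹ • T.star T.base := fun g hg =>
    T.smul_ne_star (s * g) (by rw [mul_smul, hg, smul_inv_smul])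
  obtain ⟨_, rfl | rfl, hxb⟩ := hx
  · exact ⟨h • T.base, ⟨hh, fun h' => hne (T.eq_one_of_smul h h'), smul_base_ne h⟩,
      T.smul_le_smul h hxb⟩
  · refine ⟨h • s⁻¹ • T.star T.base, ⟨((adj_inv_smul_star_base hs).smul h).trans hh,
      fun h' => smul_base_ne h⁻¹ ?_, fun h' => hne ?_⟩, T.smul_le_smul h hxb⟩
    · exact inv_smul_eq_iff.2 h'.symm
    · have := T.eq_one_of_smul_star (s * h * s⁻¹) (by rw [mul_smul, mul_smul, h', smul_inv_smul])
      simpa using this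

lemma zpow_smul_mem_axisHalfTrees {k : ℤ} (hk : s ^ k ≠ 1) {x : E}
    (hx : x ∈ T.offAxisHalfTrees s) : s ^ k • x ∈ T.axisHalfTrees s := by
  obtain ⟨c, ⟨hc, hne, hne'⟩, hxc⟩ := hx
  obtain ⟨n, rfl | rfl⟩ := k.eq_nat_or_neg <;>
    obtain ⟨m, rfl⟩ : ∃ m, n = m + 1 := Nat.exists_eq_succ_of_ne_zero (by rintro rfl; simp at hk)
  · have hc' : c ≤ s⁻¹ • T.base := by
      simpa only [T.smul_star, T.star_star] using
        ((hc.trans (adj_inv_smul_star_base hs).symm).lt_star hne').le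
    refine ⟨T.base, Or.inl rfl, (T.smul_le_smul _ (hxc.trans hc')).trans ?_⟩
    rw [smul_smul, zpow_natCast, pow_succ, mul_inv_cancel_right]
    exact pow_smul_base_le hs m
  · refine ⟨_, Or.inr rfl, (T.smul_le_smul _ (hxc.trans (hc.lt_star hne).le)).trans ?_⟩
    rw [_root_.zpow_neg, zpow_natCast, pow_succ, _root_.mul_inv_rev, mul_smul]
    exact T.smul_le_smul _ (inv_pow_smul_star_base_le hs m)

lemma isFreeProduct_vertexStab_zpowers (htf : ∀ g : G, IsOfFinOrder g → g = 1)
    (hbot : T.vertexStab T.base ≠ ⊥) :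
    IsFreeProduct fun i => cond i (T.vertexStab T.base) (Subgroup.zpowers s) := by
  have nonempty_axis : (T.axisHalfTrees s).Nonempty := ⟨T.base, T.base, Or.inl rfl, le_rfl⟩
  refine isFreeProduct_of_ping_pong htf
    (X := fun i => cond i (T.offAxisHalfTrees s) (T.axisHalfTrees s)) hbot
    (vertexStab_sup_zpowers hs) ?_ (disjoint_offAxisHalfTrees hs) ?_
  · rintro (_ | _)
    · exact nonempty_axis
    · obtain ⟨h, hh, hne⟩ := (Subgroup.bot_or_exists_ne_one _).resolve_left hbot
      exact ⟨_, smul_mem_offAxisHalfTrees hs hh hne nonempty_axis.some_mem⟩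
  · rintro (_ | _) h hh hne x hx
    · obtain ⟨k, rfl⟩ := Subgroup.mem_zpowers_iff.1 hh
      exact zpow_smul_mem_axisHalfTrees hs hne hx
    · exact smul_mem_offAxisHalfTrees hs hh hne hx

end Loop

section Segment

variable {T} (hs : ∀ s : G, ¬ T.Adj (s • T.base) (T.star T.base))
include hs

lemma vertexStab_ne_bot {b : E} (hb : b = T.base ∨ b = T.star T.base) (hlt : ∃ x, x < T.star b) :
    T.vertexStab b ≠ ⊥ := by
  intro hbot
  let _ : LocallyFiniteOrder E := LocallyFiniteOrder.ofFiniteIcc T.finite_Icc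
  obtain ⟨x, hx⟩ := hlt
  obtain ⟨y, -, hy⟩ := exists_le_covBy_of_lt hx
  have hyb : T.Adj y b := Or.inr hy
  have hne : y ≠ b := fun h => T.not_le_star le_rfl (h ▸ hy.le)
  have eq_one : ∀ g : G, T.Adj (g • b) b → g = 1 := fun g hg =>
    Subgroup.mem_bot.1 (hbot ▸ (hg : g ∈ T.vertexStab b))
  obtain ⟨g, hg⟩ := T.exists_smul y
  rcases hb with rfl | rfl <;> rcases hg with rfl | rfl
  · exact hne (by rw [eq_one g hyb, one_smul])
  · exact hs g⁻¹ (by simpa using (hyb.smul g⁻¹).symm)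
  · exact hs g hyb
  · exact hne (by rw [eq_one g hyb, one_smul])

lemma isFreeProduct_vertexStab (htf : ∀ g : G, IsOfFinOrder g → g = 1) :
    IsFreeProduct fun i => cond i (T.vertexStab T.base) (T.vertexStab (T.star T.base)) := by
  refine isFreeProduct_of_ping_pong htf
    (X := fun i => cond i (Set.Iic (T.star T.base)) (Set.Iic T.base))
    (vertexStab_ne_bot hs (Or.inl rfl) T.exists_lt_star)
    (ContainsAdjacent.eq_top ⟨le_sup_left, le_sup_right, fun g hg => absurd hg (hs g)⟩)
    ?_ (Set.disjoint_left.2 fun x hx hx' => T.not_le_star hx' hx) ?_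
  · rintro (_ | _) <;> exact Set.nonempty_Iic
  · rintro (_ | _) h hh hne x hx
    · have hlt := Adj.lt_star (show T.Adj (h • T.star T.base) (T.star T.base) from hh)
        fun h' => hne (T.eq_one_of_smul_star h h')
      rw [T.star_star] at hlt
      exact (T.smul_le_smul h hx).trans hlt.le
    · have hlt := Adj.lt_star (show T.Adj (h • T.base) T.base from hh)
        fun h' => hne (T.eq_one_of_smul h h')
      exact (T.smul_le_smul h hx).trans hlt.le

end Segment

-- The quotient graph is a loop, giving an HNN extension over the trivial group, or a segment.
theorem isCyclic_or_exists_isFreeProduct (T : TreeOrder G E)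
    (htf : ∀ g : G, IsOfFinOrder g → g = 1) :
    IsCyclic G ∨ ∃ H : Bool → Subgroup G, (∀ i, H i ≠ ⊥) ∧ IsFreeProduct H := by
  by_cases hs : ∃ s : G, T.Adj (s • T.base) (T.star T.base)
  · obtain ⟨s, hs⟩ := hs
    by_cases hbot : T.vertexStab T.base = ⊥
    · have hgen := vertexStab_sup_zpowers hs
      rw [hbot, bot_sup_eq] at hgen
      exact Or.inl ⟨s, fun x => (Subgroup.eq_top_iff' _).1 hgen x⟩
    · have zpowers_ne : Subgroup.zpowers s ≠ ⊥ := fun h => by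
        have hlt := smul_base_lt hs
        simp [Subgroup.zpowers_eq_bot.1 h] at hlt
      exact Or.inr ⟨_, Bool.forall_bool.2 ⟨zpowers_ne, hbot⟩,
        isFreeProduct_vertexStab_zpowers hs htf hbot⟩
  · rw [not_exists] at hs
    exact Or.inr ⟨_, Bool.forall_bool.2 ⟨vertexStab_ne_bot hs (Or.inr rfl)
        (by simpa only [T.star_star] using T.exists_lt),
      vertexStab_ne_bot hs (Or.inl rfl) T.exists_lt_star⟩, isFreeProduct_vertexStab hs htf⟩

end TreeOrder

/-! ### Half-spaces -/

section Stabilizer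

open Filter

variable {G : Type*} [Group G] {A : Set G} {h : G}

lemma eventually_pow_mul_notMem (hh : ¬ IsOfFinOrder h) {D : Set G} (hD : D.Finite) (x : G) :
    ∀ᶠ k : ℕ in atTop, h ^ k * x ∉ D := by
  have hinj : Function.Injective fun k : ℕ => h ^ k * x := fun k l hkl =>
    injective_pow_iff_not_isOfFinOrder.2 hh (mul_right_cancel hkl)
  simpa only [Nat.cofinite_eq_atTop] using
    hinj.tendsto_cofinite.eventually hD.eventually_cofinite_notMem

lemma IsAlmostInvariant.eventually_pow_mul_mem_or_notMem (hA : IsAlmostInvariant A)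
    (hh : ¬ IsOfFinOrder h) (hhA : ∀ᶠ y in cofinite, (y ∈ A ↔ h * y ∈ A)) :
    (∀ x, ∀ᶠ k : ℕ in atTop, h ^ k * x ∈ A) ∨ ∀ x, ∀ᶠ k : ℕ in atTop, h ^ k * x ∉ A := by
  obtain ⟨K, hK⟩ := eventually_atTop.1 (eventually_pow_mul_notMem hh hhA 1)
  have pow_mem_iff : ∀ k ≥ K, (h ^ k ∈ A ↔ h ^ K ∈ A) := by
    intro k hk
    induction k, hk using Nat.le_induction with
    | base => rfl
    | succ k hk ih =>
      have := hK k hk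
      simp only [mul_one, Set.mem_compl_iff, Set.mem_ofPred_eq, not_not] at this
      rw [← ih, this, pow_succ']
  by_cases hKA : h ^ K ∈ A
  · refine Or.inl fun x => ?_
    filter_upwards [eventually_ge_atTop K, eventually_pow_mul_notMem hh (hA x) 1] with k hk hk'
    by_contra hx
    exact hk' ⟨by simpa using (pow_mem_iff k hk).2 hKA, by simpa using hx⟩
  · refine Or.inr fun x => ?_
    filter_upwards [eventually_ge_atTop K, eventually_pow_mul_notMem hh (hA x⁻¹) x] with k hk hk'
    exact fun hx => hk' ⟨hx, by simpa using fun h' => hKA ((pow_mem_iff k hk).1 h')⟩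

lemma exists_not_pow_mul_mem_iff {x : G} (hx : x ∉ A) (hev : ∀ᶠ k : ℕ in atTop, h ^ k * x ∈ A) :
    ∃ k : ℕ, ¬ (h ^ k * x ∈ A ↔ h * (h ^ k * x) ∈ A) := by
  by_contra! hiff
  obtain ⟨k, hk⟩ := hev.exists
  refine hx ?_
  induction k with
  | zero => simpa using hk
  | succ k ih => exact ih ((hiff k).2 (by rwa [← mul_assoc, ← pow_succ']))

lemma finite_compl_of_eventually_mem (hhA : ∀ᶠ y in cofinite, (y ∈ A ↔ h * y ∈ A))
    (hpow : ∀ x, ∀ᶠ k : ℕ in atTop, h ^ k * x ∈ A)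
    (hinv : ∀ x, ∀ᶠ k : ℕ in atTop, h⁻¹ ^ k * x ∈ A) : Aᶜ.Finite := by
  refine (Set.Finite.biUnion (t := fun d => (fun k : ℕ => h⁻¹ ^ k * d) '' {k | h⁻¹ ^ k * d ∉ A})
    hhA fun d _ => Set.Finite.image _ ?_).subset fun y hy => ?_
  · have := hinv d
    rwa [← Nat.cofinite_eq_atTop] at this
  · obtain ⟨k, hk⟩ := exists_not_pow_mul_mem_iff hy (hpow y)
    simp only [Set.mem_iUnion]
    exact ⟨h ^ k * y, hk, k, by simpa using hy, by simp⟩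

lemma finiteIndex_zpowers_of_eventually (hhA : ∀ᶠ y in cofinite, (y ∈ A ↔ h * y ∈ A))
    (hpow : ∀ x, ∀ᶠ k : ℕ in atTop, h ^ k * x ∈ A)
    (hinv : ∀ x, ∀ᶠ k : ℕ in atTop, h⁻¹ ^ k * x ∉ A) : (Subgroup.zpowers h).FiniteIndex := by
  have coset_meets : ∀ x, ∃ k : ℤ, ¬ (h ^ k * x ∈ A ↔ h * (h ^ k * x) ∈ A) := by
    intro x
    obtain ⟨l, hl⟩ := (hinv x).exists
    obtain ⟨k, hk⟩ := exists_not_pow_mul_mem_iff hl (hpow _)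
    refine ⟨k - l, ?_⟩
    have : h ^ ((k : ℤ) - l) * x = h ^ k * (h⁻¹ ^ l * x) := by
      rw [_root_.zpow_sub, zpow_natCast, zpow_natCast, inv_pow, mul_assoc]
    rwa [this]
  have mk_surjective : Function.Surjective fun d : ↥({y | (y ∈ A ↔ h * y ∈ A)}ᶜ : Set G) =>
      (((d : G)⁻¹ : G) : G ⧸ Subgroup.zpowers h) := by
    intro q
    obtain ⟨x, rfl⟩ := QuotientGroup.mk_surjective q
    obtain ⟨k, hk⟩ := coset_meets x⁻¹
    refine ⟨⟨_, hk⟩, ?_⟩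
    rw [QuotientGroup.eq]
    exact ⟨k, by simp⟩
  have : Finite ({y | (y ∈ A ↔ h * y ∈ A)}ᶜ : Set G) := hhA
  have := Finite.of_surjective _ mk_surjective
  exact Subgroup.finiteIndex_of_finite_quotient

-- An element of infinite order that almost preserves `A` has both its positive and its negative
-- powers converge to a side of `A`: to the same side only if the other one is finite, and to
-- opposite sides only if the group has two ends.
lemma IsNestedCut.eq_one_of_eventually (hA : IsNestedCut A)
    (htf : ∀ g : G, IsOfFinOrder g → g = 1) (hvc : ∀ g : G, ¬ (Subgroup.zpowers g).FiniteIndex)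
    (hhA : ∀ᶠ y in cofinite, (y ∈ A ↔ h * y ∈ A)) : h = 1 := by
  by_contra hne
  have hh : ¬ IsOfFinOrder h := fun h' => hne (htf h h')
  have hhA' : ∀ᶠ y in cofinite, (y ∈ A ↔ h⁻¹ * y ∈ A) := by
    filter_upwards [(mul_right_injective h⁻¹).tendsto_cofinite.eventually hhA] with y hy
    rw [hy, mul_inv_cancel_left]
  rcases hA.isAlmostInvariant.eventually_pow_mul_mem_or_notMem hh hhA with hpow | hpow <;>
  rcases hA.isAlmostInvariant.eventually_pow_mul_mem_or_notMem (by simpa using hh) hhA'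
    with hinv | hinv
  · exact hA.infinite_compl (finite_compl_of_eventually_mem hhA hpow hinv)
  · exact hvc h (finiteIndex_zpowers_of_eventually hhA hpow hinv)
  · exact hvc _ (finiteIndex_zpowers_of_eventually hhA' hinv (by simpa using hpow))
  · refine hA.infinite ?_
    rw [← compl_compl A]
    exact finite_compl_of_eventually_mem (by simpa [not_iff_not] using hhA) hpow hinv

end Stabilizer

/-- A translate of a fixed subset of `G` (if `side` is `true`) or of its complement. The subset is
not part of the data; it is an argument of `HalfSpace.Mem`. -/
@[ext]
structure HalfSpace (G : Type*) where
  /-- The translating element. -/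
  elt : G
  /-- Which of the two sides is meant. -/
  side : Bool

namespace HalfSpace

open Filter

/-- The complementary half-space. -/
def star {G : Type*} (e : HalfSpace G) : HalfSpace G := ⟨e.elt, !e.side⟩

lemma star_star {G : Type*} (e : HalfSpace G) : e.star.star = e := by
  simp [star]

variable {G : Type*} [Group G]

instance : MulAction G (HalfSpace G) where
  smul g e := ⟨g * e.elt, e.side⟩
  one_smul e := by ext <;> simp [HSMul.hSMul]
  mul_smul g h e := by ext <;> simp [HSMul.hSMul, mul_assoc]

lemma smul_def (g : G) (e : HalfSpace G) : g • e = ⟨g * e.elt, e.side⟩ := rfl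

/-- Membership of an element of `G` in a half-space with respect to `A`. -/
def Mem (A : Set G) (e : HalfSpace G) (x : G) : Prop := e.elt⁻¹ * x ∈ A ↔ e.side = true

/-- Two half-spaces cross if their four corners are nonempty. -/
def Cross (A : Set G) (e f : HalfSpace G) : Prop :=
  (∃ x, Mem A e x ∧ Mem A f x) ∧ (∃ x, Mem A e x ∧ ¬ Mem A f x) ∧
    (∃ x, ¬ Mem A e x ∧ Mem A f x) ∧ ∃ x, ¬ Mem A e x ∧ ¬ Mem A f x

/-- Inclusion of half-spaces up to finitely many elements. -/
def AlmostLE (A : Set G) (e f : HalfSpace G) : Prop := ∀ᶠ x in cofinite, Mem A e x → Mem A f x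

variable {A : Set G} {e f : HalfSpace G}

lemma mem_star {x : G} : Mem A e.star x ↔ ¬ Mem A e x := by
  unfold Mem star
  cases e.side <;> simp

lemma mem_smul {g x : G} : Mem A (g • e) x ↔ Mem A e (g⁻¹ * x) := by
  simp [Mem, smul_def, mul_assoc]

lemma inv_mul_mem_smul_iff {g h x : G} : g⁻¹ * x ∈ (g⁻¹ * h) • A ↔ h⁻¹ * x ∈ A := by
  simp [Set.mem_smul_set_iff_inv_smul_mem, mul_assoc]

section AlmostInvariant

lemma finite_separating (hA : IsAlmostInvariant A) (p q : G) :
    {e : HalfSpace G | Mem A e p ∧ ¬ Mem A e q}.Finite := by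
  have finite_translates : ∀ p q : G, {g : G | g⁻¹ * p ∈ A ∧ g⁻¹ * q ∉ A}.Finite := by
    intro p q
    refine ((hA (p⁻¹ * q)).preimage (f := fun g : G => g⁻¹ * p)
      (fun x _ y _ h => by simpa using h)).subset fun g hg => ?_
    simpa [mul_assoc] using hg
  refine (((finite_translates p q).image fun g => ⟨g, true⟩).union
    ((finite_translates q p).image fun g => ⟨g, false⟩)).subset ?_
  rintro ⟨g, _ | _⟩ hg
  · exact Or.inr ⟨g, by simpa [Mem, and_comm] using hg, rfl⟩
  · exact Or.inl ⟨g, by simpa [Mem] using hg, rfl⟩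

lemma finite_mem_and_not_mem_mul (hA : IsAlmostInvariant A) (e : HalfSpace G) (g : G) :
    {x | Mem A e x ∧ ¬ Mem A e (x * g)}.Finite := by
  have finite_translate (g : G) : {x | e.elt⁻¹ * x ∈ A ∧ e.elt⁻¹ * x * g ∉ A}.Finite :=
    (hA g).preimage (mul_right_injective e.elt⁻¹).injOn
  obtain ⟨a, _ | _⟩ := e
  · refine ((finite_translate g⁻¹).preimage (f := fun x => x * g)
      (mul_left_injective g).injOn).subset fun x hx => ?_
    simpa [Mem, mul_assoc, and_comm] using hx
  · refine (finite_translate g).subset fun x hx => ?_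
    simpa [Mem, mul_assoc] using hx

end AlmostInvariant

section NestedCut

variable (hA : IsNestedCut A)
include hA

lemma infinite_setOf_mem (e : HalfSpace G) : {x | Mem A e x}.Infinite := by
  intro hfin
  have hfin' := hfin.preimage (mul_right_injective e.elt).injOn
  obtain ⟨g, _ | _⟩ := e
  · exact hA.infinite_compl (hfin'.subset fun x hx => by simpa [Mem] using hx)
  · exact hA.infinite (hfin'.subset fun x hx => by simpa [Mem] using hx)

lemma exists_corner_eventually_empty (e f : HalfSpace G) :
    (∀ᶠ x in cofinite, ¬ (Mem A e x ∧ Mem A f x)) ∨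
    (∀ᶠ x in cofinite, ¬ (Mem A e x ∧ ¬ Mem A f x)) ∨
    (∀ᶠ x in cofinite, ¬ (¬ Mem A e x ∧ Mem A f x)) ∨
    (∀ᶠ x in cofinite, ¬ (¬ Mem A e x ∧ ¬ Mem A f x)) := by
  have eventually_notMem : ∀ {B : Set G}, B.Finite → ∀ᶠ x in cofinite, e.elt⁻¹ * x ∉ B :=
    fun h => (mul_right_injective e.elt⁻¹).tendsto_cofinite.eventually
      h.eventually_cofinite_notMem
  have hnested := hA.nested (e.elt⁻¹ * f.elt)
  obtain ⟨g, _ | _⟩ := e <;> obtain ⟨h, _ | _⟩ := f <;>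
  · simp only [Mem, Bool.false_eq_true, iff_false, iff_true, not_not]
    rcases hnested with hfin | hfin | hfin | hfin <;> have hev := eventually_notMem hfin <;>
      simp only [Set.mem_inter_iff, Set.mem_compl_iff, inv_mul_mem_smul_iff] at hev <;> tauto

lemma finite_cross (e : HalfSpace G) : {f | Cross A e f}.Finite := by
  refine (Set.Finite.image (fun p : G × Bool => (⟨e.elt * p.1, p.2⟩ : HalfSpace G))
    (hA.finite_crossing.prod (Set.finite_univ (α := Bool)))).subset ?_
  rintro f hf
  refine ⟨(e.elt⁻¹ * f.elt, f.side), ⟨?_, trivial⟩, by simp⟩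
  have nonempty_of_exists : ∀ {B : Set G}, (∃ x, e.elt⁻¹ * x ∈ B) → B.Nonempty :=
    fun ⟨x, hx⟩ => ⟨_, hx⟩
  obtain ⟨g, _ | _⟩ := e <;> obtain ⟨h, _ | _⟩ := f <;>
  · simp only [Cross, Mem, Bool.false_eq_true, iff_false, iff_true, not_not, Set.mem_ofPred_eq]
      at hf
    refine ⟨nonempty_of_exists ?_, nonempty_of_exists ?_, nonempty_of_exists ?_,
      nonempty_of_exists ?_⟩ <;>
      simp only [Set.mem_inter_iff, Set.mem_compl_iff, inv_mul_mem_smul_iff] <;> simp [hf]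

end NestedCut

lemma AlmostLE.star (h : AlmostLE A e f) : AlmostLE A f.star e.star :=
  h.mono fun x hx => by simpa only [mem_star] using mt hx

lemma AlmostLE.smul (g : G) (h : AlmostLE A e f) : AlmostLE A (g • e) (g • f) := by
  filter_upwards [(mul_right_injective g⁻¹).tendsto_cofinite.eventually h] with x hx
  simpa only [mem_smul] using hx

lemma AlmostLE.not_star (hA : IsNestedCut A) (h : AlmostLE A e f) : ¬ AlmostLE A e f.star := by
  intro hstar
  refine infinite_setOf_mem hA e ?_
  have : ∀ᶠ x in cofinite, ¬ Mem A e x := by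
    filter_upwards [h, hstar] with x hxf hxs hxe
    exact mem_star.1 (hxs hxe) (hxf hxe)
  simpa using this

lemma almostLE_nested (hA : IsNestedCut A) (e f : HalfSpace G) :
    AlmostLE A e f ∨ AlmostLE A e f.star ∨ AlmostLE A e.star f ∨ AlmostLE A e.star f.star := by
  have almostLE_of_not {e f : HalfSpace G} (h : ∀ᶠ x in cofinite, ¬ (Mem A e x ∧ ¬ Mem A f x)) :
      AlmostLE A e f := h.mono fun x hx => by simpa using hx
  rcases exists_corner_eventually_empty hA e f with h | h | h | h
  · exact Or.inr (Or.inl (almostLE_of_not (by simpa only [mem_star, not_not] using h)))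
  · exact Or.inl (almostLE_of_not h)
  · exact Or.inr (Or.inr (Or.inr (almostLE_of_not (by simpa only [mem_star, not_not] using h))))
  · exact Or.inr (Or.inr (Or.inl (almostLE_of_not (by simpa only [mem_star, not_not] using h))))

lemma exists_almostLE_ne (hA : IsNestedCut A) (e : HalfSpace G) :
    ∃ f, AlmostLE A f e ∧ f ≠ e := by
  obtain ⟨p, hp⟩ := hA.infinite.nonempty
  obtain ⟨q, hq⟩ := hA.infinite_compl.nonempty
  have infinite_mul_mem : {g | Mem A e (g * p)}.Infinite := fun hfin =>
    infinite_setOf_mem hA e <|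
      (hfin.image fun g => g * p).subset fun x hx => ⟨x * p⁻¹, by simpa using hx, by simp⟩
  have finite_separated : {g | Mem A e (g * p) ∧ ¬ Mem A e (g * q)}.Finite := by
    refine ((finite_mem_and_not_mem_mul hA.isAlmostInvariant e (p⁻¹ * q)).preimage
      (f := fun x => x * p) (mul_left_injective p).injOn).subset fun x hx => ?_
    simpa using hx
  have finite_crossing : {g : G | Cross A e ⟨g, true⟩}.Finite :=
    (finite_cross hA e).preimage (f := fun g => (⟨g, true⟩ : HalfSpace G))
      fun x _ y _ h => congrArg elt h
  obtain ⟨g, hgp, hg⟩ := (infinite_mul_mem.sdiff ((finite_separated.union finite_crossing).union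
    (Set.finite_singleton e.elt))).nonempty
  simp only [Set.mem_union, Set.mem_singleton_iff, not_or, Set.mem_ofPred_eq, not_and, not_not]
    at hgp hg
  obtain ⟨⟨hgq, hcross⟩, hne⟩ := hg
  by_cases hout : ∃ x, ¬ Mem A e x ∧ Mem A ⟨g, true⟩ x
  · refine ⟨star ⟨g, true⟩, .of_forall fun x hx => ?_, fun h => hne (congrArg elt h)⟩
    by_contra hxe
    exact hcross ⟨⟨_, hgp, by simpa [Mem] using hp⟩, ⟨_, hgq hgp, by simpa [Mem] using hq⟩, hout,
      x, hxe, mem_star.1 hx⟩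
  · push Not at hout
    exact ⟨⟨g, true⟩, .of_forall fun x hx => not_imp_not.1 (hout x) hx,
      fun h => hne (congrArg elt h)⟩

section Order

variable (htf : ∀ g : G, IsOfFinOrder g → g = 1) (hvc : ∀ g : G, ¬ (Subgroup.zpowers g).FiniteIndex)
  (hA : IsNestedCut A)
include htf hvc hA

lemma eq_of_eventually_mem_iff (h : ∀ᶠ x in cofinite, (Mem A e x ↔ Mem A f x)) : e = f := by
  have : Infinite G := hA.infinite.to_subtype.of_injective _ Subtype.val_injective
  set g := f.elt⁻¹ * e.elt with hg
  have mem_iff : ∀ᶠ x in cofinite, ((x ∈ A ↔ e.side = true) ↔ (g * x ∈ A ↔ f.side = true)) := by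
    simpa only [Mem, ← mul_assoc, inv_mul_cancel, one_mul, hg] using
      (mul_right_injective e.elt).tendsto_cofinite.eventually h
  have sq_mem_iff : ∀ᶠ x in cofinite, (x ∈ A ↔ g ^ 2 * x ∈ A) := by
    filter_upwards [mem_iff, (mul_right_injective g).tendsto_cofinite.eventually mem_iff]
      with x hx hgx
    rw [pow_two, mul_assoc]
    tauto
  have g_eq_one : g = 1 := htf _ (isOfFinOrder_iff_pow_eq_one.2
    ⟨2, two_pos, hA.eq_one_of_eventually htf hvc sq_mem_iff⟩)
  obtain ⟨x, hx⟩ := mem_iff.exists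
  simp only [g_eq_one, one_mul] at hx
  refine HalfSpace.ext (inv_mul_eq_one.1 g_eq_one).symm ?_
  rw [Bool.eq_iff_iff]
  tauto

lemma AlmostLE.eq_or_forall_mem (h : AlmostLE A e f) (hcross : ¬ Cross A e f) :
    f = e ∨ ∀ x, Mem A e x → Mem A f x := by
  have exists_mem_mem : ∃ x, Mem A e x ∧ Mem A f x := by
    by_contra! hdisj
    exact h.not_star hA (.of_forall fun x hx => mem_star.2 (hdisj x hx))
  have exists_notMem_notMem : ∃ x, ¬ Mem A e x ∧ ¬ Mem A f x := by
    by_contra! hcover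
    refine h.star.not_star hA (.of_forall fun x hx => ?_)
    simp only [mem_star, not_not] at hx ⊢
    exact not_imp_comm.1 (hcover x) hx
  by_cases hef : ∃ x, Mem A e x ∧ ¬ Mem A f x
  · left
    have hfe : ¬ ∃ x, ¬ Mem A e x ∧ Mem A f x := fun hfe =>
      hcross ⟨exists_mem_mem, hef, hfe, exists_notMem_notMem⟩
    push Not at hfe
    refine eq_of_eventually_mem_iff htf hvc hA ?_
    filter_upwards [h] with x hx
    exact ⟨not_imp_not.1 (hfe x), hx⟩
  · push Not at hef
    exact Or.inr hef

lemma finite_between (e f : HalfSpace G) : {x | AlmostLE A e x ∧ AlmostLE A x f}.Finite := by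
  obtain ⟨p, hp⟩ := (infinite_setOf_mem hA e).nonempty
  obtain ⟨q, hq⟩ := (infinite_setOf_mem hA f.star).nonempty
  refine ((((finite_cross hA e).union ((finite_cross hA f.star).image star)).union
    (Set.toFinite {e, f})).union (finite_separating hA.isAlmostInvariant p q)).subset ?_
  rintro x ⟨hex, hxf⟩
  simp only [Set.mem_union, Set.mem_insert_iff, Set.mem_singleton_iff]
  by_cases hcross : Cross A e x
  · exact Or.inl (Or.inl (Or.inl hcross))
  by_cases hcross' : Cross A f.star x.star
  · exact Or.inl (Or.inl (Or.inr ⟨_, hcross', star_star x⟩))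
  rcases hex.eq_or_forall_mem htf hvc hA hcross with rfl | hex'
  · exact Or.inl (Or.inr (Or.inl rfl))
  rcases hxf.star.eq_or_forall_mem htf hvc hA hcross' with hfx | hfx
  · exact Or.inl (Or.inr (Or.inr (by rw [← star_star x, hfx, star_star])))
  · exact Or.inr ⟨hex' p hp, mem_star.1 (hfx q hq)⟩

/-- Almost inclusion is a partial order on half-spaces. This is not an instance because it depends
on the set `A`. -/
abbrev partialOrder : PartialOrder (HalfSpace G) where
  le := AlmostLE A
  le_refl _ := .of_forall fun _ => id
  le_trans _ _ _ hef hfg := by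
    filter_upwards [hef, hfg] with x hx hx' using hx' ∘ hx
  le_antisymm _ _ hef hfe := eq_of_eventually_mem_iff htf hvc hA <| by
    filter_upwards [hef, hfe] with x hx hx' using ⟨hx, hx'⟩

/-- The tree whose oriented edges are the half-spaces of a nested cut. -/
def treeOrder : @TreeOrder G (HalfSpace G) _ (partialOrder htf hvc hA) _ :=
  let _ := partialOrder htf hvc hA
  have exists_lt (e : HalfSpace G) : ∃ f, f < e :=
    let ⟨f, hle, hne⟩ := exists_almostLE_ne hA e
    ⟨f, lt_of_le_of_ne hle hne⟩
  { star := star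
    base := ⟨1, true⟩
    star_star := star_star
    star_le_star := AlmostLE.star
    smul_le_smul := fun g _ _ => AlmostLE.smul g
    smul_star := fun _ _ => rfl
    not_le_star := AlmostLE.not_star hA
    nested := almostLE_nested hA
    finite_Icc := finite_between htf hvc hA
    exists_smul := by
      rintro ⟨g, _ | _⟩
      · exact ⟨g, Or.inr (by simp [smul_def, star])⟩
      · exact ⟨g, Or.inl (by simp [smul_def])⟩
    eq_one_of_smul := fun g hg => by simpa [smul_def] using congrArg elt hg
    smul_ne_star := fun g hg => by simpa [smul_def, star] using congrArg side hg
    exists_lt := exists_lt _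
    exists_lt_star := exists_lt _ }

end Order

end HalfSpace

theorem IsNestedCut.exists_isFreeProduct {G : Type*} [Group G] {A : Set G} (hA : IsNestedCut A)
    (htf : ∀ g : G, IsOfFinOrder g → g = 1)
    (hvc : ∀ g : G, ¬ (Subgroup.zpowers g).FiniteIndex) :
    ∃ H : Bool → Subgroup G, (∀ i, H i ≠ ⊥) ∧ IsFreeProduct H := by
  let _ := HalfSpace.partialOrder htf hvc hA
  refine ((HalfSpace.treeOrder htf hvc hA).isCyclic_or_exists_isFreeProduct htf).resolve_left ?_
  rintro ⟨g, hg⟩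
  refine hvc g ?_
  rw [(Subgroup.eq_top_iff' (Subgroup.zpowers g)).2 hg]
  infer_instance

/-! ### Cancellation in free groups -/

section CommonPrefix

variable {β : Type*} [DecidableEq β] {l m r : List β} {k : ℕ}

/-- The length of the longest common prefix of two lists. -/
def commonPrefixLength : List β → List β → ℕ
  | a :: l, b :: m => if a = b then commonPrefixLength l m + 1 else 0
  | _, _ => 0

lemma commonPrefixLength_comm (l m : List β) :
    commonPrefixLength l m = commonPrefixLength m l := by
  induction l generalizing m with
  | nil => cases m <;> rfl
  | cons a l ih =>
    cases m with
    | nil => rfl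
    | cons b m => simp [commonPrefixLength, ih m, eq_comm]

lemma le_commonPrefixLength_iff :
    k ≤ commonPrefixLength l m ↔ k ≤ l.length ∧ k ≤ m.length ∧ l.take k = m.take k := by
  induction l generalizing m k with
  | nil => cases m <;> simp +contextual [commonPrefixLength]
  | cons a l ih =>
    cases m with
    | nil => simp +contextual [commonPrefixLength]
    | cons b m =>
      cases k with
      | zero => simp
      | succ k => by_cases hab : a = b <;> simp [commonPrefixLength, hab, ih]

lemma commonPrefixLength_self (l : List β) : commonPrefixLength l l = l.length :=
  le_antisymm (le_commonPrefixLength_iff.1 le_rfl).1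
    (le_commonPrefixLength_iff.2 ⟨le_rfl, le_rfl, rfl⟩)

lemma commonPrefixLength_eq_of_lt (h : commonPrefixLength l m < commonPrefixLength m r) :
    commonPrefixLength l r = commonPrefixLength l m := by
  obtain ⟨-, hr, hmr⟩ := le_commonPrefixLength_iff.1 (le_refl (commonPrefixLength m r))
  obtain ⟨hl, -, hlm⟩ := le_commonPrefixLength_iff.1 (le_refl (commonPrefixLength l m))
  have take_eq : ∀ k ≤ commonPrefixLength m r, m.take k = r.take k := fun k hk => by
    rw [← min_eq_left hk, ← List.take_take, hmr, List.take_take]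
  refine le_antisymm (le_of_not_gt fun hlt => ?_)
    (le_commonPrefixLength_iff.2 ⟨hl, h.le.trans hr, by rw [hlm, take_eq _ h.le]⟩)
  obtain ⟨hl', -, hlr⟩ := le_commonPrefixLength_iff.1 (Nat.succ_le_of_lt hlt)
  have hm := (le_commonPrefixLength_iff.1 (Nat.succ_le_of_lt h)).1
  exact (Nat.lt_irrefl _) (le_commonPrefixLength_iff.2 ⟨hl', hm, by rw [hlr, take_eq _ h]⟩)

lemma head?_drop_commonPrefixLength_ne (l m : List β) {a b : β}
    (ha : (l.drop (commonPrefixLength l m)).head? = some a)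
    (hb : (m.drop (commonPrefixLength l m)).head? = some b) : a ≠ b := by
  induction l generalizing m with
  | nil => simp at ha
  | cons c l ih =>
    cases m with
    | nil => simp at hb
    | cons d m =>
      by_cases hcd : c = d
      · simp only [commonPrefixLength, hcd, if_true, List.drop_succ_cons] at ha hb
        exact ih m ha hb
      · simp only [commonPrefixLength, hcd, if_false, List.drop_zero, List.head?_cons,
          Option.some.injEq] at ha hb
        rwa [← ha, ← hb]

end CommonPrefix

section Gromov

open FreeGroup

variable {α : Type*} [DecidableEq α]

/-- The Gromov product of two elements of a free group based at `1`: the length of the common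
initial segment of their reduced words. -/
def gromov (x y : FreeGroup α) : ℕ := commonPrefixLength x.toWord y.toWord

variable (x y : FreeGroup α)

lemma gromov_comm : gromov x y = gromov y x := commonPrefixLength_comm _ _

lemma gromov_le_left : gromov x y ≤ x.norm :=
  (le_commonPrefixLength_iff.1 (le_refl (gromov x y))).1

lemma gromov_le_right : gromov x y ≤ y.norm :=
  (le_commonPrefixLength_iff.1 (le_refl (gromov x y))).2.1

lemma take_gromov : x.toWord.take (gromov x y) = y.toWord.take (gromov x y) :=
  (le_commonPrefixLength_iff.1 (le_refl (gromov x y))).2.2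

lemma gromov_self : gromov x x = x.norm := commonPrefixLength_self _

variable {x y} in
lemma gromov_eq_of_lt {z : FreeGroup α} (h : gromov x y < gromov y z) :
    gromov x z = gromov x y :=
  commonPrefixLength_eq_of_lt h

lemma inv_mul_eq_mk : x⁻¹ * y =
    mk (invRev (x.toWord.drop (gromov x y)) ++ y.toWord.drop (gromov x y)) := by
  have hx : x = mk (x.toWord.take (gromov x y)) * mk (x.toWord.drop (gromov x y)) := by
    rw [mul_mk, List.take_append_drop, mk_toWord]
  have hy : y = mk (x.toWord.take (gromov x y)) * mk (y.toWord.drop (gromov x y)) := by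
    rw [take_gromov, mul_mk, List.take_append_drop, mk_toWord]
  rw [← mul_mk, ← inv_mk]
  calc x⁻¹ * y = (mk (x.toWord.take (gromov x y)) * mk (x.toWord.drop (gromov x y)))⁻¹ *
        (mk (x.toWord.take (gromov x y)) * mk (y.toWord.drop (gromov x y))) := by rw [← hx, ← hy]
    _ = _ := by group

lemma toWord_inv_mul : (x⁻¹ * y).toWord =
    invRev (x.toWord.drop (gromov x y)) ++ y.toWord.drop (gromov x y) := by
  rw [inv_mul_eq_mk, toWord_mk]
  refine IsReduced.reduce_eq (List.isChain_append.2 ⟨?_, isReduced_toWord.drop _, ?_⟩)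
  · exact isReduced_iff_reduce_eq.2 (by
      rw [reduce_invRev, IsReduced.reduce_eq (isReduced_toWord.drop _)])
  rintro ⟨i, s⟩ hi ⟨j, t⟩ hj (rfl : i = j)
  have hi' : (x.toWord.drop (gromov x y)).head? = some (i, !s) := by
    rw [invRev, List.getLast?_reverse, List.head?_map] at hi
    obtain ⟨⟨i, s⟩, hc, hcs⟩ := Option.map_eq_some_iff.1 hi
    cases hcs
    simpa using hc
  have hne := head?_drop_commonPrefixLength_ne x.toWord y.toWord hi' hj
  simpa [Bool.not_eq] using hne

lemma norm_inv_mul : (x⁻¹ * y).norm + 2 * gromov x y = x.norm + y.norm := by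
  have hx := gromov_le_left x y
  have hy := gromov_le_right x y
  simp only [FreeGroup.norm] at hx hy ⊢
  rw [toWord_inv_mul, List.length_append, invRev_length, List.length_drop, List.length_drop]
  omega

lemma gromov_inv_add_gromov_mul : gromov x⁻¹ y + gromov x (x * y) = x.norm := by
  have hinv := norm_inv_mul x⁻¹ y
  have hmul := norm_inv_mul x (x * y)
  rw [inv_inv, norm_inv_eq] at hinv
  rw [inv_mul_cancel_left] at hmul
  omega

variable {x}

lemma norm_lt_norm_sq (hx : x ≠ 1) : x.norm < (x ^ 2).norm := by
  set u := reduceCyclically.conjugator x.toWord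
  set v := reduceCyclically x.toWord
  have hconj : u ++ v ++ invRev u = x.toWord :=
    reduceCyclically.conj_conjugator_reduceCyclically _
  have hsq : (x ^ 2).toWord = u ++ (v ++ v) ++ invRev u := by
    rw [toWord_pow, reduceCyclically.reduce_flatten_replicate isReduced_toWord]
    simp [u, v]
  have hv : v ≠ [] := by
    intro hv
    refine hx ?_
    rw [← mk_toWord (x := x), ← hconj, hv, List.append_nil, ← mul_mk, ← inv_mk, mul_inv_cancel]
  have hpos := List.length_pos_iff.2 hv
  rw [FreeGroup.norm, FreeGroup.norm, hsq, ← hconj]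
  simp only [List.length_append]
  omega

lemma two_mul_gromov_inv_lt (hx : x ≠ 1) : 2 * gromov x x⁻¹ < x.norm := by
  have hlt := norm_lt_norm_sq hx
  have hmul := norm_inv_mul x⁻¹ x
  rw [inv_inv, ← pow_two, norm_inv_eq, gromov_comm] at hmul
  omega

end Gromov

section StartsWith

open FreeGroup

variable {α : Type*} [DecidableEq α]

lemma toWord_inv_mul_of_gromov_eq_zero {x y : FreeGroup α} (h : gromov x y = 0) :
    (x⁻¹ * y).toWord = invRev x.toWord ++ y.toWord := by
  rw [toWord_inv_mul, h, List.drop_zero, List.drop_zero]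

lemma gromov_eq_zero_of_head?_ne {x y : FreeGroup α} (h : x.toWord.head? ≠ y.toWord.head?) :
    gromov x y = 0 := by
  by_contra hpos
  obtain ⟨-, -, htake⟩ := le_commonPrefixLength_iff.1 (Nat.one_le_iff_ne_zero.2 hpos)
  simpa [List.head?_take, h] using congrArg List.head? htake

lemma isAlmostInvariant_startsWith (c : α × Bool) : IsAlmostInvariant (startsWith c) := by
  intro u
  have hsub : {x | x ∈ startsWith c ∧ x * u ∉ startsWith c} ⊆
      (fun l => (mk l)⁻¹) '' {l | l ∈ u.toWord.inits} := by
    rintro x ⟨hx, hxu⟩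
    have hzero : gromov x (x * u) = 0 := gromov_eq_zero_of_head?_ne (by
      simp only [startsWith, Set.mem_ofPred_eq, List.head?_eq_getElem?] at hx hxu ⊢
      rw [hx]
      exact Ne.symm hxu)
    have hu := toWord_inv_mul_of_gromov_eq_zero hzero
    rw [inv_mul_cancel_left] at hu
    refine ⟨invRev x.toWord, (List.mem_inits _ _).2 ⟨_, hu.symm⟩, ?_⟩
    simp only [← inv_mk, inv_inv, mk_toWord]
  exact ((List.finite_toSet _).image _).subset hsub

lemma infinite_startsWith_of (a : α) : (startsWith (a, true)).Infinite := by
  refine Set.infinite_of_injective_forall_mem (f := fun k : ℕ => of a ^ (k + 1)) ?_ fun k => ?_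
  · intro k l hkl
    simpa using congrArg FreeGroup.norm hkl
  · simp [startsWith]

lemma conj_injective_freeGroup {β : Type*} [Nontrivial β] :
    Function.Injective (MulAut.conj (G := FreeGroup β)) := by
  classical
  rw [injective_iff_map_eq_one]
  intro a ha
  by_contra hne
  obtain ⟨c, L, hcL⟩ := List.exists_cons_of_ne_nil (mt toWord_eq_nil_iff.1 hne)
  obtain ⟨y, hy⟩ := exists_ne c.1
  have hword : (of y * a).toWord = (y, true) :: a.toWord := by
    have hzero : gromov (of y)⁻¹ a = 0 := gromov_eq_zero_of_head?_ne (by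
      simpa [hcL, invRev] using fun h => hy (congrArg Prod.fst h))
    simpa [invRev] using toWord_inv_mul_of_gromov_eq_zero hzero
  have hcomm : a * of y = of y * a := 
    mul_inv_eq_iff_eq_mul.1 (DFunLike.congr_fun ha (of y))
  have happend := (toWord_mul_sublist a (of y)).eq_of_length (by rw [hcomm, hword]; simp)
  rw [hcomm, hword, hcL] at happend
  exact hy (congrArg Prod.fst (List.cons.inj happend).1)

end StartsWith

/-! ### Torsion-free groups with a free subgroup of finite index -/

section FiniteIndex

variable {G : Type*} [Group G]

lemma IsAlmostInvariant.preimage {H : Type*} [Group H] {A : Set H} (hA : IsAlmostInvariant A)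
    (e : G ≃* H) : IsAlmostInvariant (e ⁻¹' A) := fun g => by
  simpa using (hA (e g)).preimage e.injective.injOn

/-- The union of the right translates of `A` by the transversal `T` of `K`. -/
def extendByTransversal {K : Subgroup G} {T : Set G} (hT : Subgroup.IsComplement (K : Set G) T)
    (A : Set K) : Set G := {g | (hT.equiv g).1 ∈ A}

lemma IsAlmostInvariant.extendByTransversal {K : Subgroup G} [K.FiniteIndex] {T : Set G}
    (hT : Subgroup.IsComplement (K : Set G) T) {A : Set K} (hA : IsAlmostInvariant A) :
    IsAlmostInvariant (extendByTransversal hT A) := fun u => by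
  have hpiece (t : T) : {r : K | r ∈ A ∧ r * (hT.equiv (t * u)).1 ∉ A}.Finite :=
    hA (hT.equiv (t * u)).1
  have := hT.finite_right.to_subtype
  refine (Set.finite_iUnion fun t : T => (hpiece t).image fun r : K => (r : G) * t).subset ?_
  rintro g ⟨hg, hgu⟩
  refine Set.mem_iUnion.2 ⟨(hT.equiv g).2, (hT.equiv g).1, ⟨hg, fun hmem => hgu ?_⟩,
    hT.equiv_fst_mul_equiv_snd g⟩
  change (hT.equiv (g * u)).1 ∈ A
  nth_rw 1 [← hT.equiv_fst_mul_equiv_snd g]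
  rwa [mul_assoc, hT.equiv_mul_left]

lemma infinite_extendByTransversal {K : Subgroup G} {T : Set G}
    (hT : Subgroup.IsComplement (K : Set G) T) {A : Set K} (hA : A.Infinite) :
    (extendByTransversal hT A).Infinite := by
  obtain ⟨t⟩ : Nonempty T := ⟨(hT.equiv 1).2⟩
  have hsnd : Function.Surjective fun g => (hT.equiv g).1 := fun r =>
    ⟨hT.equiv.symm (r, t), by simp⟩
  exact hA.preimage (by rw [hsnd.range_eq]; exact Set.subset_univ A)

lemma exists_isAlmostInvariant_of_isFreeGroup [IsFreeGroup G]
    [Nontrivial (IsFreeGroup.Generators G)] :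
    ∃ A : Set G, IsAlmostInvariant A ∧ A.Infinite ∧ Aᶜ.Infinite := by
  classical
  obtain ⟨x, y, hxy⟩ := exists_pair_ne (IsFreeGroup.Generators G)
  let e := IsFreeGroup.toFreeGroup G
  have hinf (z) : (e ⁻¹' FreeGroup.startsWith (z, true)).Infinite :=
    (infinite_startsWith_of z).preimage (by simp [e.surjective.range_eq])
  refine ⟨_, (isAlmostInvariant_startsWith (x, true)).preimage e, hinf x, (hinf y).mono ?_⟩
  exact fun g hy hx => (FreeGroup.startsWith.disjoint_iff_ne.2 (by simpa using hxy)).ne_of_mem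
    hx hy rfl

lemma exists_isCut_of_finiteIndex (K : Subgroup G) [K.FiniteIndex] [IsFreeGroup K]
    [Nontrivial (IsFreeGroup.Generators K)] {S : Set G} (hS : S.Finite) :
    ∃ A, IsCut S A := by
  obtain ⟨A, hA, hinf, hinf'⟩ := exists_isAlmostInvariant_of_isFreeGroup (G := K)
  obtain ⟨T, hT, -⟩ := K.exists_isComplement_right 1
  exact ⟨_, (hA.extendByTransversal hT).isCut hS (infinite_extendByTransversal hT hinf)
    (infinite_extendByTransversal hT hinf')⟩

lemma not_finiteIndex_zpowers (K : Subgroup G) [IsFreeGroup K]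
    [Nontrivial (IsFreeGroup.Generators K)] (g : G) : ¬ (Subgroup.zpowers g).FiniteIndex := by
  classical
  intro hfin
  obtain ⟨x, y, hxy⟩ := exists_pair_ne (IsFreeGroup.Generators K)
  have power_mem (z) : ∃ m : ℕ, 0 < m ∧ ∃ i : ℤ, g ^ i = ((IsFreeGroup.of z : K) : G) ^ m := by
    obtain ⟨m, hm, -, hmem⟩ := Subgroup.exists_pow_mem_of_index_ne_zero hfin.index_ne_zero
      ((IsFreeGroup.of z : K) : G)
    exact ⟨m, hm, hmem⟩
  obtain ⟨m, hm, i, hi⟩ := power_mem x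
  obtain ⟨k, hk, j, hj⟩ := power_mem y
  have hpow : (IsFreeGroup.of x : K) ^ (m * j) = IsFreeGroup.of y ^ (k * i) := by
    refine Subtype.ext ?_
    push_cast
    rw [_root_.zpow_mul, _root_.zpow_mul, zpow_natCast, zpow_natCast, ← hi, ← hj,
      ← _root_.zpow_mul, ← _root_.zpow_mul, mul_comm]
  let exponent (z : IsFreeGroup.Generators K) : K →* Multiplicative ℤ :=
    IsFreeGroup.lift fun w => Multiplicative.ofAdd (if w = z then (1 : ℤ) else 0)
  have hj0 : j = 0 := by
    simpa [exponent, hm.ne', hxy.symm] using congrArg (exponent x) hpow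
  have hyk : (IsFreeGroup.of y : K) ^ k = 1 := Subtype.ext (by simpa [hj0] using hj.symm)
  have hk0 : k = 0 := by simpa [exponent] using congrArg (exponent y) hyk
  exact hk.ne' hk0

theorem exists_isFreeProduct_of_finiteIndex [Group.FG G]
    (htf : ∀ g : G, IsOfFinOrder g → g = 1) (K : Subgroup G) [K.FiniteIndex] [IsFreeGroup K]
    [Nontrivial (IsFreeGroup.Generators K)] :
    ∃ H : Bool → Subgroup G, (∀ i, H i ≠ ⊥) ∧ IsFreeProduct H := by
  obtain ⟨S, hS⟩ := Group.FG.out (G := G)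
  have hclosure : Subgroup.closure ((S : Set G) ∪ (S : Set G)⁻¹) = ⊤ := by
    rw [Subgroup.closure_union, Subgroup.closure_inv, hS, sup_idem]
  have hinv : ∀ s ∈ (S : Set G) ∪ (S : Set G)⁻¹, s⁻¹ ∈ (S : Set G) ∪ (S : Set G)⁻¹ := by
    rintro s (hs | hs)
    · exact Or.inr (by simpa using hs)
    · exact Or.inl hs
  obtain ⟨A, hA⟩ := exists_isNestedCut hclosure hinv
    (exists_isCut_of_finiteIndex K (S.finite_toSet.union S.finite_toSet.inv))
  exact hA.exists_isFreeProduct htf (not_finiteIndex_zpowers K)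

end FiniteIndex

section Cyclic

variable {G : Type*} [Group G]

lemma isFreeGroup_of_isCyclic [IsCyclic G] (htf : ∀ g : G, IsOfFinOrder g → g = 1) :
    IsFreeGroup G := by
  cases finite_or_infinite G
  · have : Subsingleton G := ⟨fun g h => by
      rw [htf g (isOfFinOrder_of_finite g), htf h (isOfFinOrder_of_finite h)]⟩
    have : Unique G := uniqueOfSubsingleton 1
    exact IsFreeGroup.ofMulEquiv (MulEquiv.ofUnique (M := FreeGroup Empty))
  · exact IsFreeGroup.ofMulEquiv
      ((FreeGroup.mulEquivIntOfUnique (α := Unit)).trans intCyclicMulEquiv)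

lemma isCyclic_of_isFreeGroup [IsFreeGroup G] [Subsingleton (IsFreeGroup.Generators G)] :
    IsCyclic G := by
  rw [(IsFreeGroup.toFreeGroup G).isCyclic]
  rcases isEmpty_or_nonempty (IsFreeGroup.Generators G) with hempty | ⟨⟨x⟩⟩
  · infer_instance
  · have : Unique (IsFreeGroup.Generators G) := uniqueOfSubsingleton x
    rw [FreeGroup.mulEquivIntOfUnique.isCyclic]
    infer_instance

-- If `g` conjugates a generator `z` to `z ^ m`, then it fixes the power `z ^ k = g ^ [G : K]`, so
-- `z ^ ((m - 1) * k) = 1`.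
lemma le_center_of_isCyclic_of_finiteIndex (htf : ∀ g : G, IsOfFinOrder g → g = 1)
    (K : Subgroup G) [K.Normal] [K.FiniteIndex] [IsCyclic K] : K ≤ Subgroup.center G := by
  obtain ⟨⟨z, hz⟩, hgen⟩ := IsCyclic.exists_generator (α := K)
  replace hgen {g : G} (hg : g ∈ K) : ∃ k : ℤ, z ^ k = g := by
    obtain ⟨k, hk⟩ := hgen ⟨g, hg⟩
    exact ⟨k, by simpa using congrArg Subtype.val hk⟩
  have hcomm (g : G) : g * z * g⁻¹ = z := by
    obtain ⟨m, hm⟩ := hgen (‹K.Normal›.conj_mem z hz g)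
    obtain ⟨k, hk⟩ := hgen (K.pow_index_mem g)
    have hfix : z ^ (m * k) = z ^ k := by
      rw [_root_.zpow_mul, hm, conj_zpow, hk]
      group
    rcases eq_or_ne ((m - 1) * k) 0 with hzero | hne
    · rcases mul_eq_zero.1 hzero with hm1 | rfl
      · rw [← hm, sub_eq_zero.1 hm1, zpow_one]
      · have hg : g = 1 := htf g (isOfFinOrder_iff_pow_eq_one.2
          ⟨K.index, Nat.pos_of_ne_zero ‹K.FiniteIndex›.index_ne_zero, by simpa using hk.symm⟩)
        simp [hg]
    · have hz1 : z = 1 := htf z (isOfFinOrder_iff_zpow_eq_one.2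
        ⟨(m - 1) * k, hne, by rw [sub_one_mul, _root_.zpow_sub, hfix, mul_inv_cancel]⟩)
      simp [hz1]
  intro a ha
  obtain ⟨k, rfl⟩ := hgen ha
  exact zpow_mem (Subgroup.mem_center_iff.2 fun g => mul_inv_eq_iff_eq_mul.1 (hcomm g)) k

lemma isCyclic_of_finiteIndex (htf : ∀ g : G, IsOfFinOrder g → g = 1)
    (K : Subgroup G) [K.Normal] [K.FiniteIndex] [IsCyclic K] : IsCyclic G := by
  have hle := le_center_of_isCyclic_of_finiteIndex htf K
  have := Subgroup.finiteIndex_of_le hle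
  have eq_one_of_pow {g : G} {n : ℕ} (hn : n ≠ 0) (hg : g ^ n = 1) : g = 1 :=
    htf g (isOfFinOrder_iff_pow_eq_one.2 ⟨n, Nat.pos_of_ne_zero hn, hg⟩)
  have hinj : Function.Injective (MonoidHom.transferCenterPow G) := by
    refine (injective_iff_map_eq_one _).2 fun g hg => ?_
    exact eq_one_of_pow Subgroup.FiniteIndex.index_ne_zero (congrArg Subtype.val hg)
  have hcomm (g h : G) : Commute g h := hinj (by
    rw [_root_.map_mul, _root_.map_mul]
    exact Subtype.ext (Subgroup.mem_center_iff.1 (Subtype.prop _) _))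
  let power : G →* K := MonoidHom.mk' (fun g => ⟨g ^ K.index, K.pow_index_mem g⟩) fun g h =>
    Subtype.ext ((hcomm g h).mul_pow _)
  refine isCyclic_of_injective power ((injective_iff_map_eq_one _).2 fun g hg => ?_)
  exact eq_one_of_pow (Subgroup.FiniteIndex.index_ne_zero (H := K)) (congrArg Subtype.val hg)

end Cyclic

section FreeProduct

lemma finite_monoidHom_of_fg {G Q : Type*} [Group G] [Group.FG G] [Group Q] [Finite Q] :
    Finite (G →* Q) := by
  obtain ⟨S, hS⟩ := Group.FG.out (G := G)
  refine Finite.of_injective (fun (φ : G →* Q) (s : S) => φ s) fun φ ψ hφψ => ?_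
  exact MonoidHom.eq_of_eqOn_dense hS fun s hs => congrFun hφψ ⟨s, hs⟩

lemma nontrivial_monoidHom_of_isFreeGroup {G Q : Type*} [Group G] [IsFreeGroup G] [Nontrivial G]
    [Group Q] [Nontrivial Q] : Nontrivial (G →* Q) := by
  have : Nonempty (IsFreeGroup.Generators G) := by
    by_contra hempty
    rw [not_nonempty_iff] at hempty
    exact not_subsingleton G (IsFreeGroup.toFreeGroup G).subsingleton
  exact (IsFreeGroup.lift (G := G) (H := Q)).symm.nontrivial

lemma isFreeGroup_of_injective {G G' : Type*} [Group G] [Group G'] [IsFreeGroup G']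
    (φ : G →* G') (hφ : Function.Injective φ) : IsFreeGroup G :=
  IsFreeGroup.ofMulEquiv (MonoidHom.ofInjective hφ).symm

lemma isFreeGroup_ker_comp_subtype {G Q : Type*} [Group G] [Group Q] (π : G →* Q)
    [IsFreeGroup π.ker] (H : Subgroup G) : IsFreeGroup (π.comp H.subtype).ker :=
  isFreeGroup_of_injective
    ((H.subtype.comp (π.comp H.subtype).ker.subtype).codRestrict π.ker fun x => x.2)
    fun _ _ hxy => Subtype.ext (Subtype.ext (congrArg (fun z : π.ker => (z : G)) hxy))

lemma nontrivial_monoidHom_of_isFreeGroup_ker {G Q : Type*} [Group G] [Nontrivial G] [Group Q]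
    [Nontrivial Q] (π : G →* Q) [IsFreeGroup π.ker] : Nontrivial (G →* Q) := by
  by_cases hπ : π = 1
  · have : IsFreeGroup G := isFreeGroup_of_injective
      ((MonoidHom.id G).codRestrict π.ker fun g => by simp [hπ])
      fun x y hxy => congrArg Subtype.val hxy
    exact nontrivial_monoidHom_of_isFreeGroup
  · exact ⟨_, _, hπ⟩

namespace IsFreeProduct

variable {G : Type*} [Group G] {H : Bool → Subgroup G}

lemma fg [Group.FG G] (hH : IsFreeProduct H) (i : Bool) : Group.FG (H i) :=
  let e := MulEquiv.ofBijective _ hH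
  let retraction : Monoid.CoprodI (fun i => H i) →* H i :=
    Monoid.CoprodI.lift (Pi.mulSingle i (MonoidHom.id _))
  Group.fg_of_surjective (f := retraction.comp e.symm.toMonoidHom) fun h =>
    ⟨e (Monoid.CoprodI.of h), by simp [retraction]⟩

lemma card_monoidHom (hH : IsFreeProduct H) (Q : Type*) [Group Q] :
    Nat.card (G →* Q) = Nat.card (H true →* Q) * Nat.card (H false →* Q) := by
  let e := MulEquiv.ofBijective _ hH
  rw [Nat.card_congr (e.monoidHomCongrLeftEquiv.symm.trans Monoid.CoprodI.lift.symm), Nat.card_pi]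
  simp

lemma card_monoidHom_lt [Group.FG G] (hH : IsFreeProduct H) (hne : ∀ i, H i ≠ ⊥) {Q : Type*}
    [Group Q] [Finite Q] [Nontrivial Q] (π : G →* Q) [IsFreeGroup π.ker] (i : Bool) :
    Nat.card (H i →* Q) < Nat.card (G →* Q) := by
  have one_lt (i) : 1 < Nat.card (H i →* Q) := by
    have := hH.fg i
    have := finite_monoidHom_of_fg (G := H i) (Q := Q)
    have := (Subgroup.nontrivial_iff_ne_bot _).2 (hne i)
    have := isFreeGroup_ker_comp_subtype π (H i)
    exact Finite.one_lt_card_iff_nontrivial.2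
      (nontrivial_monoidHom_of_isFreeGroup_ker (π.comp (H i).subtype))
  rw [hH.card_monoidHom]
  cases i
  · exact lt_mul_of_one_lt_left (Nat.zero_lt_of_lt (one_lt false)) (one_lt true)
  · exact lt_mul_of_one_lt_right (Nat.zero_lt_of_lt (one_lt true)) (one_lt false)

end IsFreeProduct

end FreeProduct

section Stallings

-- Grushko's rank is replaced by the number of homomorphisms to `Q`, which is visibly
-- multiplicative for free products.
theorem isFreeGroup_of_isFreeGroup_ker {G Q : Type*} [Group G] [Group.FG G] [Group Q] [Finite Q]
    [Nontrivial Q] (htf : ∀ g : G, IsOfFinOrder g → g = 1) (π : G →* Q) [IsFreeGroup π.ker] :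
    IsFreeGroup G := by
  rcases subsingleton_or_nontrivial (IsFreeGroup.Generators π.ker) with hsub | hnon
  · have := isCyclic_of_isFreeGroup (G := π.ker)
    have := isCyclic_of_finiteIndex htf π.ker
    exact isFreeGroup_of_isCyclic htf
  · obtain ⟨H, hne, hH⟩ := exists_isFreeProduct_of_finiteIndex htf π.ker
    have hfree (i : Bool) : IsFreeGroup (H i) := by
      have := hH.fg i
      have := isFreeGroup_ker_comp_subtype π (H i)
      exact isFreeGroup_of_isFreeGroup_ker
        (fun g hg => Subtype.ext (htf g ((H i).subtype.isOfFinOrder hg)))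
        (π.comp (H i).subtype)
    exact IsFreeGroup.ofMulEquiv (MulEquiv.ofBijective _ hH)
termination_by Nat.card (G →* Q)
decreasing_by exact hH.card_monoidHom_lt hne π i

end Stallings

/-! ### Subgroups of index two -/

section IndexTwo

open FreeGroup

variable {κ : Type*}

/-- The free basis of the subgroup of words of even exponent sum in the letter `none`, obtained
from the Schreier transversal `{1, none}`. -/
def evenGen : Option (κ ⊕ κ) → FreeGroup (Option κ)
  | none => of none ^ 2
  | some (Sum.inl i) => of (some i)
  | some (Sum.inr i) => of none * of (some i) * (of none)⁻¹

/-- The left translation action of the free group on `Option κ` on itself, in the coordinates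
`evenCoord`. -/
def evenAction : FreeGroup (Option κ) →* Equiv.Perm (FreeGroup (Option (κ ⊕ κ)) × Bool) :=
  FreeGroup.lift fun
    | none =>
      { toFun := fun x => if x.2 then (x.1, false) else (of none * x.1, true)
        invFun := fun x => if x.2 then ((of none)⁻¹ * x.1, false) else (x.1, true)
        left_inv := by rintro ⟨p, _ | _⟩ <;> simp
        right_inv := by rintro ⟨p, _ | _⟩ <;> simp }
    | some i =>
      { toFun := fun x => (of (some (if x.2 then Sum.inr i else Sum.inl i)) * x.1, x.2)
        invFun := fun x => ((of (some (if x.2 then Sum.inr i else Sum.inl i)))⁻¹ * x.1, x.2)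
        left_inv := by rintro ⟨p, _ | _⟩ <;> simp
        right_inv := by rintro ⟨p, _ | _⟩ <;> simp }

/-- The pairs `(p, false)` and `(p, true)` are coordinates for the elements `w` and `none⁻¹ * w`
respectively, where `w` is the even word given by `p`. -/
def evenCoord (x : FreeGroup (Option (κ ⊕ κ)) × Bool) : FreeGroup (Option κ) :=
  (if x.2 then (of none)⁻¹ else 1) * FreeGroup.lift evenGen x.1

lemma evenAction_of_none (x : FreeGroup (Option (κ ⊕ κ)) × Bool) :
    evenAction (of none) x = if x.2 then (x.1, false) else (of none * x.1, true) := by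
  rw [evenAction, lift_apply_of]; rfl

lemma evenAction_of_none_symm (p : FreeGroup (Option (κ ⊕ κ))) :
    (evenAction (of none)).symm (p, false) = (p, true) := by
  rw [evenAction, lift_apply_of]; rfl

lemma evenAction_of_some (i : κ) (x : FreeGroup (Option (κ ⊕ κ)) × Bool) :
    evenAction (of (some i)) x =
      (of (some (if x.2 then Sum.inr i else Sum.inl i)) * x.1, x.2) := by
  rw [evenAction, lift_apply_of]; rfl

lemma evenAction_lift_evenGen (w p : FreeGroup (Option (κ ⊕ κ))) :
    evenAction (FreeGroup.lift evenGen w) (p, false) = (w * p, false) := by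
  induction w using FreeGroup.induction_on generalizing p with
  | C1 => simp
  | of y =>
    rcases y with _ | (i | i)
    · simp [evenGen, pow_two, evenAction_of_none]
    · simp [evenGen, evenAction_of_some]
    · simp [evenGen, evenAction_of_some, evenAction_of_none, evenAction_of_none_symm]
  | inv_of y hy =>
    rw [_root_.map_inv, _root_.map_inv, Equiv.Perm.inv_eq_iff_eq, hy, mul_inv_cancel_left]
  | mul u v hu hv => rw [_root_.map_mul, _root_.map_mul, Equiv.Perm.mul_apply, hv, hu, mul_assoc]

lemma lift_evenGen_injective : Function.Injective (FreeGroup.lift (evenGen (κ := κ))) := by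
  intro u v huv
  have hu := evenAction_lift_evenGen u 1
  rw [huv, evenAction_lift_evenGen v 1] at hu
  simpa using (congrArg Prod.fst hu).symm

lemma evenCoord_evenAction (g : FreeGroup (Option κ)) (x : FreeGroup (Option (κ ⊕ κ)) × Bool) :
    evenCoord (evenAction g x) = g * evenCoord x := by
  induction g using FreeGroup.induction_on generalizing x with
  | C1 => simp
  | of y =>
    obtain ⟨p, _ | _⟩ := x <;> rcases y with _ | i
    · simp [evenCoord, evenAction_of_none, evenGen, pow_two, mul_assoc]
    · simp [evenCoord, evenAction_of_some, evenGen]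
    · simp [evenCoord, evenAction_of_none]
    · simp [evenCoord, evenAction_of_some, evenGen, mul_assoc]
  | inv_of y hy =>
    obtain ⟨x, rfl⟩ := (evenAction (of y)).surjective x
    simp [hy]
  | mul u v hu hv => rw [_root_.map_mul, Equiv.Perm.mul_apply, hu, hv, mul_assoc]

lemma evenCoord_surjective : Function.Surjective (evenCoord (κ := κ)) := fun g =>
  ⟨evenAction g (1, false), by rw [evenCoord_evenAction]; simp [evenCoord]⟩

lemma range_lift_evenGen (π : FreeGroup (Option κ) →* ℤˣ) (hnone : π (of none) = -1)
    (hsome : ∀ i, π (of (some i)) = 1) :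
    (FreeGroup.lift (evenGen (κ := κ))).range = π.ker := by
  have hle : (FreeGroup.lift (evenGen (κ := κ))).range ≤ π.ker := by
    rw [FreeGroup.range_lift_eq_closure, Subgroup.closure_le]
    rintro - ⟨_ | (i | i), rfl⟩ <;> simp [evenGen, MonoidHom.mem_ker, hnone, hsome]
  refine le_antisymm hle fun g hg => ?_
  obtain ⟨⟨p, odd⟩, rfl⟩ := evenCoord_surjective g
  have hp : π (FreeGroup.lift evenGen p) = 1 := hle ⟨p, rfl⟩
  cases odd
  · exact ⟨p, by simp [evenCoord]⟩
  · simp [evenCoord, MonoidHom.mem_ker, hp, hnone] at hg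

/-- The endomorphism multiplying each letter `some i` on the right by the power `k i` of the
letter `none`. -/
def shearHom (k : κ → ℤ) : FreeGroup (Option κ) →* FreeGroup (Option κ) :=
  FreeGroup.lift fun
    | none => of none
    | some i => of (some i) * of none ^ k i

lemma shearHom_comp_shearHom_neg (k : κ → ℤ) :
    (shearHom k).comp (shearHom (-k)) = MonoidHom.id _ := by
  ext (_ | i) <;> simp [shearHom]

/-- The automorphism given by `shearHom k`. -/
def shear (k : κ → ℤ) : MulAut (FreeGroup (Option κ)) :=
  MonoidHom.toMulEquiv (shearHom k) (shearHom (-k))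
    (by simpa using shearHom_comp_shearHom_neg (-k)) (shearHom_comp_shearHom_neg k)

lemma shear_of_none (k : κ → ℤ) : shear k (of none) = of none := by
  simp [shear, shearHom]

lemma shear_of_some (k : κ → ℤ) (i : κ) :
    shear k (of (some i)) = of (some i) * of none ^ k i := by
  simp [shear, shearHom]

lemma exists_basis_map_none_eq_neg_one {G : Type*} [Group G] [IsFreeGroup G] {π : G →* ℤˣ}
    (hπ : π ≠ 1) : ∃ i₀ : IsFreeGroup.Generators G,
      ∃ e : FreeGroup (Option {i // i ≠ i₀}) ≃* G, π (e (of none)) = -1 := by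
  classical
  obtain ⟨i₀, hi₀⟩ : ∃ i, π (IsFreeGroup.basis G i) ≠ 1 := by
    by_contra! hcon
    exact hπ ((IsFreeGroup.basis G).ext_hom π 1 (by simpa using hcon))
  let b := (IsFreeGroup.basis G).reindex (Equiv.optionSubtypeNe i₀).symm
  refine ⟨i₀, b.repr.symm, (Int.units_eq_one_or _).resolve_left ?_⟩
  change π (b none) ≠ 1
  simpa [b] using hi₀

lemma exists_basis_adapted {G : Type*} [Group G] [IsFreeGroup G] {π : G →* ℤˣ} (hπ : π ≠ 1) :
    ∃ i₀ : IsFreeGroup.Generators G, ∃ e : FreeGroup (Option {i // i ≠ i₀}) ≃* G,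
      π (e (of none)) = -1 ∧ ∀ i, π (e (of (some i))) = 1 := by
  classical
  obtain ⟨i₀, e, he⟩ := exists_basis_map_none_eq_neg_one hπ
  let k (i : {i // i ≠ i₀}) : ℤ := if π (e (of (some i))) = 1 then 0 else 1
  refine ⟨i₀, (shear k).trans e, by simp [shear_of_none, he], fun i => ?_⟩
  by_cases hi : π (e (of (some i))) = 1
  · simp [shear_of_some, k, hi]
  · simp [shear_of_some, k, he, (Int.units_eq_one_or _).resolve_left hi]

/-- The automorphism fixing the letter `x = none` and sending `a i` to `b i` and `b i` to
`x * a i * x⁻¹`, where `a i` and `b i` are the two copies of the letter `i`. Its square is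
conjugation by `x`. -/
def twistedSwap : MulAut (FreeGroup (Option (κ ⊕ κ))) :=
  MonoidHom.toMulEquiv
    (FreeGroup.lift fun
      | none => of none
      | some (Sum.inl i) => of (some (Sum.inr i))
      | some (Sum.inr i) => of none * of (some (Sum.inl i)) * (of none)⁻¹)
    (FreeGroup.lift fun
      | none => of none
      | some (Sum.inl i) => (of none)⁻¹ * of (some (Sum.inr i)) * of none
      | some (Sum.inr i) => of (some (Sum.inl i)))
    (by ext (_ | i | i) <;> simp [mul_assoc]) (by ext (_ | i | i) <;> simp [mul_assoc])

lemma twistedSwap_of_none : twistedSwap (of (none : Option (κ ⊕ κ))) = of none := by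
  simp [twistedSwap]

lemma twistedSwap_of_inl (i : κ) :
    twistedSwap (of (some (Sum.inl i))) = of (some (Sum.inr i)) := by
  simp [twistedSwap]

lemma twistedSwap_of_inr (i : κ) :
    twistedSwap (of (some (Sum.inr i))) = of none * of (some (Sum.inl i)) * (of none)⁻¹ := by
  simp [twistedSwap]

lemma lift_evenGen_twistedSwap (w : FreeGroup (Option (κ ⊕ κ))) :
    FreeGroup.lift evenGen (twistedSwap w) =
      of none * FreeGroup.lift evenGen w * (of none)⁻¹ := by
  have hcomp : (FreeGroup.lift evenGen).comp (twistedSwap (κ := κ)).toMonoidHom =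
      (MulAut.conj (of none)).toMonoidHom.comp (FreeGroup.lift evenGen) := by
    ext (_ | i | i) <;>
      simp [evenGen, twistedSwap_of_none, twistedSwap_of_inl, twistedSwap_of_inr, pow_two,
        mul_assoc]
  exact DFunLike.congr_fun hcomp w

lemma exists_mulEquiv_ker {G : Type*} [Group G] [IsFreeGroup G] {π : G →* ℤˣ} (hπ : π ≠ 1) :
    ∃ i₀ : IsFreeGroup.Generators G,
      ∃ (e : FreeGroup (Option ({i // i ≠ i₀} ⊕ {i // i ≠ i₀})) ≃* π.ker) (t : G),
        π t = -1 ∧ MulAut.conjNormal t = MulAut.congr e twistedSwap := by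
  obtain ⟨i₀, b, hnone, hsome⟩ := exists_basis_adapted hπ
  let Φ := b.toMonoidHom.comp (FreeGroup.lift evenGen)
  have hΦ : Function.Injective Φ := b.injective.comp lift_evenGen_injective
  have hrange : Φ.range = π.ker := by
    rw [MonoidHom.range_comp, range_lift_evenGen (π.comp b.toMonoidHom) hnone hsome,
      ← MonoidHom.comap_ker, Subgroup.map_comap_eq_self_of_surjective b.surjective]
  let e := (MonoidHom.ofInjective hΦ).trans (MulEquiv.subgroupCongr hrange)
  have he (w) : (e w : G) = b (FreeGroup.lift evenGen w) := rfl
  refine ⟨i₀, e, b (of none), hnone, MulEquiv.ext fun x => Subtype.ext ?_⟩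
  obtain ⟨w, rfl⟩ := e.surjective x
  simp [MulAut.congr_apply, he, lift_evenGen_twistedSwap]

end IndexTwo

/-! ### Lifts of outer involutions -/

section NormalForm

lemma group_fg_of_finiteIndex {G : Type*} [Group G] (K : Subgroup G) [K.FiniteIndex]
    [Group.FG K] : Group.FG G := by
  obtain ⟨S, hS, hSfin⟩ := (Subgroup.fg_iff K).1 ((Group.fg_iff_subgroup_fg K).1 ‹_›)
  obtain ⟨T, hT, -⟩ := K.exists_isComplement_right 1
  refine Group.fg_iff.2 ⟨S ∪ T, ?_, hSfin.union hT.finite_right⟩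
  refine (Subgroup.eq_top_iff' _).2 fun g => ?_
  obtain ⟨⟨k, t⟩, rfl⟩ := hT.surjective g
  rw [Subgroup.closure_union, hS]
  exact mul_mem (Subgroup.mem_sup_left k.2) (Subgroup.mem_sup_right (Subgroup.subset_closure t.2))

variable {n : ℕ}

lemma toOut_eq_one_iff {g : FrAut n} : toOut n g = 1 ↔ ∃ a, MulAut.conj a = g := by
  rw [← MonoidHom.mem_ker, toOut, QuotientGroup.ker_mk']
  rfl

lemma toOut_surjective (n : ℕ) : Function.Surjective (toOut n) := QuotientGroup.mk'_surjective _

/-- The group of lifts of powers of `f`, an extension of `⟨f⟩` by the inner automorphisms. -/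
abbrev liftGroup (f : OutF n) : Subgroup (FrAut n) := (Subgroup.zpowers f).comap (toOut n)

variable {f : OutF n} (hf : orderOf f = 2)

/-- The projection of `liftGroup f` onto `⟨f⟩`, with `⟨f⟩` identified with `ℤˣ`. -/
noncomputable def liftSign : liftGroup f →* ℤˣ :=
  (mulEquivOfPrimeCardEq (p := 2) (by rw [Nat.card_zpowers, hf]) (by simp)).toMonoidHom.comp
    ((toOut n).subgroupComap (Subgroup.zpowers f))

lemma liftSign_eq_one_iff {g : liftGroup f} : liftSign hf g = 1 ↔ toOut n g = 1 := by
  rw [liftSign, MonoidHom.comp_apply]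
  exact (MulEquiv.map_eq_one_iff _).trans Subtype.ext_iff

include hf in
lemma toOut_liftGroup (g : liftGroup f) : toOut n g = 1 ∨ toOut n g = f := by
  obtain ⟨k, hk : f ^ k = toOut n g⟩ := g.2
  rw [← hk, ← zpow_mod_orderOf f k, hf]
  rcases Int.emod_two_eq_zero_or_one k with hk | hk <;> simp [hk]

lemma liftSign_eq_neg_one_iff {g : liftGroup f} : liftSign hf g = -1 ↔ toOut n g = f := by
  have hne : f ≠ 1 := fun h => by simp [h] at hf
  have hone := liftSign_eq_one_iff hf (g := g)
  rcases toOut_liftGroup hf g with hg | hg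
  · simp [hone.2 hg, hg, hne.symm]
  · exact iff_of_true ((Int.units_eq_one_or _).resolve_left fun h => hne (hg ▸ hone.1 h)) hg

lemma liftSign_ne_one : liftSign hf ≠ 1 := by
  obtain ⟨t, ht⟩ := toOut_surjective n f
  have htm : t ∈ liftGroup f := by
    rw [liftGroup, Subgroup.mem_comap, ht]
    exact Subgroup.mem_zpowers f
  intro hsign
  have := (liftSign_eq_neg_one_iff hf (g := ⟨t, htm⟩)).2 ht
  simp [hsign] at this

/-- The inner automorphisms as elements of `liftGroup f`. -/
def liftConj (f : OutF n) : FreeGroup (Fin n) →* liftGroup f :=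
  MulAut.conj.codRestrict (liftGroup f) fun a => by
    rw [liftGroup, Subgroup.mem_comap, toOut_eq_one_iff.2 ⟨a, rfl⟩]
    exact one_mem _

lemma range_liftConj : (liftConj f).range = (liftSign hf).ker := by
  ext g
  rw [MonoidHom.mem_ker, liftSign_eq_one_iff, toOut_eq_one_iff]
  exact ⟨fun ⟨a, ha⟩ => ⟨a, congrArg Subtype.val ha⟩, fun ⟨a, ha⟩ => ⟨a, Subtype.ext ha⟩⟩

variable [Nontrivial (Fin n)]

lemma liftConj_injective (f : OutF n) : Function.Injective (liftConj f) := fun _ _ h =>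
  conj_injective_freeGroup (congrArg Subtype.val h)

/-- The isomorphism onto `ker (liftSign hf)` sending `a` to conjugation by `a`. -/
noncomputable def conjEquivKer : FreeGroup (Fin n) ≃* (liftSign hf).ker :=
  (MonoidHom.ofInjective (liftConj_injective f)).trans (MulEquiv.subgroupCongr (range_liftConj hf))

lemma congr_conjEquivKer_symm_conjNormal (t : liftGroup f) :
    MulAut.congr (conjEquivKer hf).symm (MulAut.conjNormal t) = (t : FrAut n) := by
  have hcoe (a) : ((conjEquivKer hf a : liftGroup f) : FrAut n) = MulAut.conj a := rfl
  refine MulEquiv.ext fun a => (conjEquivKer hf).injective (Subtype.ext (Subtype.ext ?_))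
  simp only [MulAut.congr_apply, MulEquiv.trans_apply, MulEquiv.symm_symm,
    MulEquiv.apply_symm_apply, MulAut.conjNormal_apply, Subgroup.coe_mul, Subgroup.coe_inv, hcoe]
  ext x
  simp

include hf in
lemma eq_one_of_isOfFinOrder_liftGroup (hnl : ¬ ∃ h : FrAut n, IsOfFinOrder h ∧ toOut n h = f)
    (g : liftGroup f) (hg : IsOfFinOrder g) : g = 1 := by
  rcases toOut_liftGroup hf g with hone | hgf
  · obtain ⟨a, ha⟩ := toOut_eq_one_iff.1 hone
    obtain rfl : liftConj f a = g := Subtype.ext ha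
    rw [(liftConj_injective f).isOfFinOrder_iff, isOfFinOrder_iff_eq_one] at hg
    rw [hg, _root_.map_one]
  · exact absurd ⟨g, (liftGroup f).subtype.isOfFinOrder hg, hgf⟩ hnl

include hf in
lemma isFreeGroup_liftGroup (hnl : ¬ ∃ h : FrAut n, IsOfFinOrder h ∧ toOut n h = f) :
    IsFreeGroup (liftGroup f) := by
  have : Group.FG (liftSign hf).ker :=
    Group.fg_of_surjective (f := (conjEquivKer hf).toMonoidHom) (conjEquivKer hf).surjective
  have := group_fg_of_finiteIndex (liftSign hf).ker
  have : IsFreeGroup (liftSign hf).ker := IsFreeGroup.ofMulEquiv (conjEquivKer hf)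
  have : Nontrivial ℤˣ := ⟨1, -1, by decide⟩
  exact isFreeGroup_of_isFreeGroup_ker (eq_one_of_isOfFinOrder_liftGroup hf hnl) (liftSign hf)

theorem exists_toOut_congr_twistedSwap (hf : orderOf f = 2)
    (hnl : ¬ ∃ h : FrAut n, IsOfFinOrder h ∧ toOut n h = f) :
    ∃ (κ : Type) (e : FreeGroup (Option (κ ⊕ κ)) ≃* FreeGroup (Fin n)),
      toOut n (MulAut.congr e twistedSwap) = f := by
  have := isFreeGroup_liftGroup hf hnl
  obtain ⟨_, e, t, ht, hconj⟩ := exists_mulEquiv_ker (liftSign_ne_one hf)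
  refine ⟨_, e.trans (conjEquivKer hf).symm, Eq.trans ?_ ((liftSign_eq_neg_one_iff hf).1 ht)⟩
  rw [← congr_conjEquivKer_symm_conjNormal hf t, hconj]
  rfl

end NormalForm

/-! ### Transvections and Nielsen reduction -/

section Transvection

open FreeGroup

variable {α : Type*}

lemma mk_true (i : α) : (mk [(i, true)] : FreeGroup α) = of i := rfl

lemma mk_false (i : α) : (mk [(i, false)] : FreeGroup α) = (of i)⁻¹ := rfl

/-- The inverse of a letter, where `(i, true)` stands for the generator `i` and `(i, false)` for its
inverse. -/
def bar (c : α × Bool) : α × Bool := (c.1, !c.2)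

@[simp] lemma bar_fst (c : α × Bool) : (bar c).1 = c.1 := rfl

@[simp] lemma bar_bar (c : α × Bool) : bar (bar c) = c := by simp [bar]

@[simp] lemma mk_bar (c : α × Bool) : (mk [bar c] : FreeGroup α) = (mk [c])⁻¹ := rfl

lemma eq_or_eq_bar {c d : α × Bool} (h : c.1 = d.1) : c = d ∨ c = bar d := by
  obtain ⟨i, s⟩ := c
  obtain ⟨j, t⟩ := d
  obtain rfl : i = j := h
  cases s <;> cases t <;> simp [bar]

lemma bar_ne (c : α × Bool) : bar c ≠ c := by
  obtain ⟨i, s⟩ := c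
  cases s <;> simp [bar]

lemma mk_singleton_ne_one (c : α × Bool) : (mk [c] : FreeGroup α) ≠ 1 := by
  obtain ⟨i, _ | _⟩ := c
  · exact inv_ne_one.2 (of_ne_one i)
  · exact of_ne_one i

lemma bar_ne_of_isReduced {c e : α × Bool} {l : List (α × Bool)}
    (hl : FreeGroup.IsReduced (c :: e :: l)) : bar c ≠ e := by
  rintro rfl
  simpa [bar] using (FreeGroup.isReduced_cons_cons.1 hl).1

lemma hom_ext_letter {G : Type*} [Group G] {f g : FreeGroup α →* G} (d : α × Bool)
    (hd : f (mk [d]) = g (mk [d])) (hne : ∀ c : α × Bool, c.1 ≠ d.1 → f (mk [c]) = g (mk [c])) :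
    f = g := by
  refine FreeGroup.ext_hom _ _ fun i => ?_
  rw [← mk_true]
  by_cases hi : i = d.1
  · rcases eq_or_eq_bar (c := (i, true)) hi with hi | hi
    · rw [hi, hd]
    · rw [hi, mk_bar, _root_.map_inv, _root_.map_inv, hd]
  · exact hne _ hi

variable [DecidableEq α]

/-- The endomorphism sending the letter `d` to `c * d` and fixing the other generators. -/
def transvectionHom (c d : α × Bool) : FreeGroup α →* FreeGroup α :=
  FreeGroup.lift fun i =>
    if i = d.1 then (if d.2 then mk [c] * of i else of i * (mk [c])⁻¹) else of i

lemma transvectionHom_self (c d : α × Bool) :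
    transvectionHom c d (mk [d]) = mk [c] * mk [d] := by
  obtain ⟨i, _ | _⟩ := d
  · simp [mk_false, transvectionHom]
  · simp [mk_true, transvectionHom]

lemma transvectionHom_of_ne (c : α × Bool) {d e : α × Bool} (h : e.1 ≠ d.1) :
    transvectionHom c d (mk [e]) = mk [e] := by
  obtain ⟨i, _ | _⟩ := e
  · simp_all [mk_false, transvectionHom]
  · simp_all [mk_true, transvectionHom]

lemma transvectionHom_bar_comp {c d : α × Bool} (h : c.1 ≠ d.1) :
    (transvectionHom (bar c) d).comp (transvectionHom c d) = MonoidHom.id _ := by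
  refine hom_ext_letter d ?_ fun e he => ?_
  · rw [MonoidHom.comp_apply, transvectionHom_self, _root_.map_mul, transvectionHom_self,
      transvectionHom_of_ne _ h, mk_bar, mul_inv_cancel_left, MonoidHom.id_apply]
  · simp [transvectionHom_of_ne _ he]

/-- The automorphism sending the letter `d` to `c * d` and fixing the other generators. -/
def transvection (c d : α × Bool) (h : c.1 ≠ d.1) : MulAut (FreeGroup α) :=
  (transvectionHom c d).toMulEquiv (transvectionHom (bar c) d) (transvectionHom_bar_comp h)
    (by simpa using transvectionHom_bar_comp (c := bar c) (d := d) h)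

lemma transvection_self {c d : α × Bool} (h : c.1 ≠ d.1) :
    transvection c d h (mk [d]) = mk [c] * mk [d] := transvectionHom_self c d

lemma transvection_of_ne {c d : α × Bool} (h : c.1 ≠ d.1) {e : α × Bool} (he : e.1 ≠ d.1) :
    transvection c d h (mk [e]) = mk [e] := transvectionHom_of_ne c he

end Transvection

section WordCode

open FreeGroup

variable {α : Type*} [Fintype α]

/-- The word `l` read as a number in positional notation; on words of equal length this is a
lexicographic order. -/
noncomputable def wordCode (l : List (α × Bool)) : ℕ :=
  Nat.ofDigits (Fintype.card (α × Bool) + 1)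
    (l.map fun c => (Fintype.equivFin (α × Bool) c : ℕ)).reverse

lemma wordCode_append_lt {a b : List (α × Bool)} (h : wordCode a < wordCode b)
    (r : List (α × Bool)) : wordCode (a ++ r) < wordCode (b ++ r) := by
  simp only [wordCode, List.map_append, List.reverse_append, Nat.ofDigits_append] at h ⊢
  gcongr

lemma eq_of_wordCode_eq {a b : List (α × Bool)} (hlen : a.length = b.length)
    (h : wordCode a = wordCode b) : a = b := by
  cases isEmpty_or_nonempty (α × Bool)
  · exact Subsingleton.elim _ _
  have hinj : Function.Injective fun c => (Fintype.equivFin (α × Bool) c : ℕ) :=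
    Fin.val_injective.comp (Equiv.injective _)
  have digit_lt (l : List (α × Bool)) :
      ∀ k ∈ (l.map fun c => (Fintype.equivFin (α × Bool) c : ℕ)).reverse,
        k < Fintype.card (α × Bool) + 1 := by
    simp only [List.mem_reverse, List.mem_map]
    rintro - ⟨c, -, rfl⟩
    exact Nat.lt_succ_of_lt (Fin.is_lt _)
  have hdigits := Nat.ofDigits_inj_of_len_eq (Nat.lt_add_of_pos_left Fintype.card_pos)
    (by simp [hlen]) (digit_lt a) (digit_lt b) h
  exact hinj.list_map (List.reverse_injective hdigits)

variable [DecidableEq α]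

/-- The code of the initial half of a word, the tie-breaker of Nielsen reduction. -/
noncomputable def halfCode (x : FreeGroup α) : ℕ := wordCode (x.toWord.take (x.norm / 2))

variable {x y : FreeGroup α} {a b r : List (α × Bool)}

lemma halfCode_of_toWord_eq_append (hx : x.toWord = a ++ r) (ha : 2 * a.length ≤ x.norm) :
    halfCode x = wordCode (a ++ r.take (x.norm / 2 - a.length)) := by
  rw [halfCode, hx, List.take_append, List.take_of_length_le (by omega)]

lemma halfCode_inv_of_toWord_eq_append (hx : x.toWord = a ++ r) (ha : 2 * a.length ≤ x.norm) :
    halfCode x⁻¹ = wordCode ((invRev r).take (x.norm / 2)) := by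
  have hlen : x.norm = a.length + r.length := by rw [FreeGroup.norm, hx, List.length_append]
  rw [halfCode, norm_inv_eq, toWord_inv, hx, invRev_append,
    List.take_append_of_le_length (by rw [invRev_length]; omega)]

lemma halfCode_add_halfCode_inv_lt (hx : x.toWord = a ++ r) (hy : y.toWord = b ++ r)
    (hlen : a.length = b.length) (hle : 2 * a.length ≤ x.norm) (hlt : wordCode a < wordCode b) :
    halfCode x + halfCode x⁻¹ < halfCode y + halfCode y⁻¹ := by
  have hnorm : x.norm = y.norm := by simp [FreeGroup.norm, hx, hy, hlen]
  rw [halfCode_of_toWord_eq_append hx hle, halfCode_inv_of_toWord_eq_append hx hle,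
    halfCode_of_toWord_eq_append hy (by omega), halfCode_inv_of_toWord_eq_append hy (by omega),
    hnorm, hlen]
  gcongr
  exact wordCode_append_lt hlt _

end WordCode

section Nielsen

open FreeGroup

variable {α : Type*} [DecidableEq α]

lemma invRev_drop_toWord {x : FreeGroup α} {k : ℕ} (hk : x.norm = 2 * k) :
    invRev (x.toWord.drop k) = x⁻¹.toWord.take k := by
  have hlen : (invRev (x.toWord.drop k)).length = k := by
    rw [invRev_length, List.length_drop]
    exact (congrArg (· - k) hk).trans (by omega)
  rw [toWord_inv, ← List.take_append_drop k x.toWord, invRev_append]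
  simp [hlen]

variable (φ : MulAut (FreeGroup α))

omit [DecidableEq α] in
lemma apply_singleton_ne_one (c : α × Bool) : φ (mk [c]) ≠ 1 :=
  (map_ne_one_iff φ φ.injective).2 (mk_singleton_ne_one c)

omit [DecidableEq α] in
lemma apply_mk_cons (c : α × Bool) (l : List (α × Bool)) :
    φ (mk (c :: l)) = φ (mk [c]) * φ (mk l) := by
  rw [← _root_.map_mul, mul_mk]
  rfl

variable {φ}

lemma fst_ne_of_two_mul_gromov_eq {c d : α × Bool} (h : c ≠ d)
    (heq : 2 * gromov (φ (mk [c])) (φ (mk [d])) = (φ (mk [c])).norm) : c.1 ≠ d.1 := by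
  intro hcd
  obtain rfl : d = bar c := (eq_or_eq_bar hcd.symm).resolve_left h.symm
  rw [mk_bar, _root_.map_inv] at heq
  exact (two_mul_gromov_inv_lt (apply_singleton_ne_one φ c)).ne heq

variable [Fintype α]

/-- No transvection decreases the total length of the images of the letters, or preserves it
while decreasing the total half code. -/
def IsNielsenMin (φ : MulAut (FreeGroup α)) : Prop :=
  ∀ c d : α × Bool, c.1 ≠ d.1 →
    (φ (mk [d])).norm ≤ (φ (mk [c]) * φ (mk [d])).norm ∧
    ((φ (mk [c]) * φ (mk [d])).norm = (φ (mk [d])).norm →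
      halfCode (φ (mk [d])) + halfCode (φ (mk [d]))⁻¹ ≤
        halfCode (φ (mk [c]) * φ (mk [d])) + halfCode (φ (mk [c]) * φ (mk [d]))⁻¹)

lemma sum_transvection (F : FreeGroup α → ℕ) (φ : MulAut (FreeGroup α)) {c d : α × Bool}
    (h : c.1 ≠ d.1) :
    ∑ e, F ((φ * transvection c d h) (mk [e])) + (F (φ (mk [d])) + F (φ (mk [d]))⁻¹) =
      ∑ e, F (φ (mk [e])) +
        (F (φ (mk [c]) * φ (mk [d])) + F (φ (mk [c]) * φ (mk [d]))⁻¹) := by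
  rw [← Finset.sum_add_sum_compl {d, bar d},
    ← Finset.sum_add_sum_compl {d, bar d} (fun e => F (φ (mk [e]))),
    Finset.sum_pair (bar_ne d).symm, Finset.sum_pair (bar_ne d).symm]
  have hrest : ∑ e ∈ ({d, bar d} : Finset (α × Bool))ᶜ, F ((φ * transvection c d h) (mk [e])) =
      ∑ e ∈ ({d, bar d} : Finset (α × Bool))ᶜ, F (φ (mk [e])) := by
    refine Finset.sum_congr rfl fun e he => ?_
    have hne : e.1 ≠ d.1 := fun hed => by
      rcases eq_or_eq_bar hed with rfl | rfl <;> simp at he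
    rw [MulAut.mul_apply, transvection_of_ne h hne]
  rw [hrest]
  simp only [mk_bar, _root_.map_inv, MulAut.mul_apply, transvection_self h, _root_.map_mul]
  ring

lemma exists_isNielsenMin (M : Subgroup (MulAut (FreeGroup α)))
    (hM : ∀ (c d : α × Bool) (h : c.1 ≠ d.1), transvection c d h ∈ M) (φ : MulAut (FreeGroup α)) :
    ∃ m ∈ M, IsNielsenMin (φ * m) := by
  let complexity (m : M) : ℕ ×ₗ ℕ :=
    toLex (∑ e, ((φ * (m : MulAut (FreeGroup α))) (mk [e])).norm,
      ∑ e, halfCode ((φ * (m : MulAut (FreeGroup α))) (mk [e])))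
  obtain ⟨m, hm⟩ : ∃ m, ∀ m', ¬ complexity m' < complexity m := by
    obtain ⟨-, ⟨m, rfl⟩, hmin⟩ :=
      WellFounded.has_min (wellFounded_lt (α := ℕ ×ₗ ℕ)) (Set.range complexity) ⟨_, 1, rfl⟩
    exact ⟨m, fun m' => hmin _ ⟨m', rfl⟩⟩
  refine ⟨m, m.2, fun c d h => ?_⟩
  have hmin := hm (m * ⟨_, hM c d h⟩)
  simp only [complexity, Prod.Lex.toLex_lt_toLex, Subgroup.coe_mul, ← mul_assoc] at hmin
  have hnorm := sum_transvection FreeGroup.norm (φ * (m : MulAut (FreeGroup α))) h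
  have hcode := sum_transvection halfCode (φ * (m : MulAut (FreeGroup α))) h
  simp only [FreeGroup.norm_inv_eq] at hnorm
  push Not at hmin
  refine ⟨by omega, fun heq => ?_⟩
  have := hmin.2 (by omega)
  omega

namespace IsNielsenMin

variable {φ : MulAut (FreeGroup α)} {c d : α × Bool}

lemma two_mul_gromov_le (hφ : IsNielsenMin φ) (h : c ≠ d) :
    2 * gromov (φ (mk [c])) (φ (mk [d])) ≤ (φ (mk [c])).norm := by
  by_cases hcd : c.1 = d.1
  · obtain rfl : d = bar c := (eq_or_eq_bar hcd.symm).resolve_left h.symm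
    rw [mk_bar, _root_.map_inv]
    exact (two_mul_gromov_inv_lt (apply_singleton_ne_one φ c)).le
  · have hmin := (hφ (bar c) d hcd).1
    rw [mk_bar, _root_.map_inv] at hmin
    have := norm_inv_mul (φ (mk [c])) (φ (mk [d]))
    omega

-- If exactly half of `φ c` cancels in `(φ c)⁻¹ * φ d`, this product arises from `φ d` by replacing
-- the first half of `φ c` with that of its inverse, so minimality compares the two halves.
lemma wordCode_take_le (hφ : IsNielsenMin φ) (h : c ≠ d) {k : ℕ}
    (hgromov : gromov (φ (mk [c])) (φ (mk [d])) = k) (hnorm : (φ (mk [c])).norm = 2 * k) :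
    wordCode ((φ (mk [c])).toWord.take k) ≤ wordCode ((φ (mk [c]))⁻¹.toWord.take k) := by
  have hcd : c.1 ≠ d.1 := fst_ne_of_two_mul_gromov_eq h (by rw [hgromov, hnorm])
  have hmin := (hφ (bar c) d hcd).2
  have hkd : 2 * k ≤ (φ (mk [d])).norm := by
    rw [← hgromov, gromov_comm]
    exact hφ.two_mul_gromov_le h.symm
  rw [mk_bar, _root_.map_inv] at hmin
  generalize φ (mk [c]) = x at *
  generalize φ (mk [d]) = y at *
  have hnorm_mul : (x⁻¹ * y).norm = y.norm := by
    have := norm_inv_mul x y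
    omega
  have hmul : (x⁻¹ * y).toWord = x⁻¹.toWord.take k ++ y.toWord.drop k := by
    rw [toWord_inv_mul, hgromov, invRev_drop_toWord hnorm]
  have hy : y.toWord = x.toWord.take k ++ y.toWord.drop k := by
    rw [← hgromov, take_gromov, List.take_append_drop]
  have hlen : (x⁻¹.toWord.take k).length = k := by
    rw [List.length_take_of_le]
    change k ≤ x⁻¹.norm
    rw [norm_inv_eq]
    omega
  have hlen' : (x.toWord.take k).length = k := List.length_take_of_le (by
    change k ≤ x.norm
    omega)
  by_contra! hlt
  exact (hmin hnorm_mul).not_gt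
    (halfCode_add_halfCode_inv_lt hmul hy (hlen.trans hlen'.symm) (by omega) hlt)

lemma gromov_add_gromov_bar_lt (hφ : IsNielsenMin φ) {x y z : α × Bool} (hxy : y ≠ x)
    (hyz : bar y ≠ z) :
    gromov (φ (mk [y])) (φ (mk [x])) + gromov (φ (mk [bar y])) (φ (mk [z])) <
      (φ (mk [y])).norm := by
  have hx := hφ.two_mul_gromov_le hxy
  have hz := hφ.two_mul_gromov_le hyz
  have hnorm : (φ (mk [bar y])).norm = (φ (mk [y])).norm := by
    rw [mk_bar, _root_.map_inv, norm_inv_eq]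
  by_contra! hle
  obtain ⟨k, hk⟩ : ∃ k, gromov (φ (mk [y])) (φ (mk [x])) = k := ⟨_, rfl⟩
  have hcode := hφ.wordCode_take_le hxy hk (by omega)
  have hcode_inv := hφ.wordCode_take_le hyz (k := k) (by omega) (by omega)
  rw [mk_bar, _root_.map_inv, inv_inv] at hcode_inv
  have hlt : 2 * gromov (φ (mk [y])) (φ (mk [y]))⁻¹ < (φ (mk [y])).norm :=
    two_mul_gromov_inv_lt (apply_singleton_ne_one φ y)
  have hlen : (φ (mk [y]))⁻¹.toWord.length = (φ (mk [y])).toWord.length := norm_inv_eq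
  have hkle : k ≤ (φ (mk [y])).toWord.length := hk ▸ gromov_le_left _ _
  have htake : (φ (mk [y])).toWord.take k = (φ (mk [y]))⁻¹.toWord.take k :=
    eq_of_wordCode_eq (by simp) (le_antisymm hcode hcode_inv)
  have : k ≤ gromov (φ (mk [y])) (φ (mk [y]))⁻¹ :=
    le_commonPrefixLength_iff.2 ⟨hkle, hlen ▸ hkle, htake⟩
  omega

-- The middle of the image of each letter survives cancellation in reduced words.
lemma gromov_lt_gromov_cons (hφ : IsNielsenMin φ) {l : List (α × Bool)}
    (hl : FreeGroup.IsReduced (c :: l)) (h : d ≠ c) :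
    gromov (φ (mk [d])) (φ (mk [c])) < gromov (φ (mk [c])) (φ (mk (c :: l))) := by
  rw [gromov_comm]
  induction l generalizing c d with
  | nil =>
    rw [gromov_self]
    have := hφ.two_mul_gromov_le h.symm
    have : (φ (mk [c])).norm ≠ 0 := by
      rw [ne_eq, FreeGroup.norm_eq_zero]
      exact apply_singleton_ne_one φ c
    omega
  | cons e l ih =>
    have hce := bar_ne_of_isReduced hl
    have hlt := ih (FreeGroup.isReduced_cons_cons.1 hl).2 hce
    rw [gromov_comm] at hlt
    have hsum := gromov_inv_add_gromov_mul (φ (mk [c])) (φ (mk (e :: l)))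
    rw [← _root_.map_inv, ← mk_bar, gromov_eq_of_lt hlt, ← apply_mk_cons] at hsum
    have := hφ.gromov_add_gromov_bar_lt h.symm hce
    omega

lemma one_lt_norm_apply (hφ : IsNielsenMin φ) {e : α × Bool} {l : List (α × Bool)}
    (hl : FreeGroup.IsReduced (c :: e :: l)) : 1 < (φ (mk (c :: e :: l))).norm := by
  have hce := bar_ne_of_isReduced hl
  have hlt := hφ.gromov_lt_gromov_cons (FreeGroup.isReduced_cons_cons.1 hl).2 hce
  have hmul := norm_inv_mul (φ (mk [bar c])) (φ (mk (e :: l)))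
  rw [gromov_eq_of_lt hlt, mk_bar, _root_.map_inv, inv_inv, ← apply_mk_cons, norm_inv_eq] at hmul
  have hle := hφ.two_mul_gromov_le hce
  rw [mk_bar, _root_.map_inv, norm_inv_eq] at hle
  rw [mk_bar, _root_.map_inv] at hlt
  have := gromov_le_right (φ (mk [e])) (φ (mk (e :: l)))
  have : (φ (mk [c])).norm ≠ 0 := by
    rw [ne_eq, FreeGroup.norm_eq_zero]
    exact apply_singleton_ne_one φ c
  omega

theorem exists_apply_eq_letter (hφ : IsNielsenMin φ) (d : α × Bool) :
    ∃ c : α × Bool, φ (mk [c]) = mk [d] := by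
  obtain ⟨x, hx⟩ := φ.surjective (mk [d])
  obtain ⟨l, hl, rfl⟩ : ∃ l, FreeGroup.IsReduced l ∧ mk l = x :=
    ⟨x.toWord, isReduced_toWord, mk_toWord⟩
  have hnorm : (φ (mk l)).norm = 1 := by simp [hx, FreeGroup.norm]
  rcases l with _ | ⟨c, _ | ⟨e, l⟩⟩
  · rw [← one_eq_mk, _root_.map_one, FreeGroup.norm_one] at hnorm
    exact absurd hnorm zero_ne_one
  · exact ⟨c, hx⟩
  · exact absurd hnorm (hφ.one_lt_norm_apply hl).ne'

end IsNielsenMin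

end Nielsen

/-! ### Generators of the automorphism group of a free group -/

section LetterIsomorphism

open FreeGroup

variable {α β : Type*}

lemma mk_singleton_injective : Function.Injective fun c : α × Bool => (mk [c] : FreeGroup α) := by
  classical
  intro c d h
  simpa using congrArg toWord h

lemma mulAut_ext_of {f g : MulAut (FreeGroup α)} (h : ∀ i, f (of i) = g (of i)) : f = g :=
  MulEquiv.toMonoidHom_injective (FreeGroup.ext_hom _ _ h)

variable {σ : FreeGroup α ≃* FreeGroup β} {s : α × Bool → β × Bool}

lemma fst_ne_of_map_letter (hσ : ∀ c, σ (mk [c]) = mk [s c]) {c d : α × Bool} (h : c.1 ≠ d.1) :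
    (s c).1 ≠ (s d).1 := by
  have hinj (e) (he : s c = s e) : c = e :=
    mk_singleton_injective (σ.injective (by rw [hσ, hσ, he]))
  intro hfst
  rcases eq_or_eq_bar hfst with heq | heq
  · exact h (congrArg Prod.fst (hinj d heq))
  · have hbar : s (bar d) = bar (s d) := mk_singleton_injective <| by
      simp only [mk_bar, ← hσ, _root_.map_inv]
    exact h (by rw [hinj (bar d) (heq.trans hbar.symm), bar_fst])

variable [DecidableEq α] [DecidableEq β]

lemma congr_transvection (hσ : ∀ c, σ (mk [c]) = mk [s c]) {c d : α × Bool} (h : c.1 ≠ d.1) :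
    MulAut.congr σ (transvection c d h) =
      transvection (s c) (s d) (fst_ne_of_map_letter hσ h) := by
  have hs := fst_ne_of_map_letter hσ h
  suffices hcomp : σ.toMonoidHom.comp (transvection c d h).toMonoidHom =
      (transvection (s c) (s d) hs).toMonoidHom.comp σ.toMonoidHom by
    refine MulEquiv.ext fun x => ?_
    simpa using DFunLike.congr_fun hcomp (σ.symm x)
  refine hom_ext_letter d ?_ fun e he => ?_
  · simp only [MonoidHom.comp_apply, MulEquiv.coe_toMonoidHom, transvection_self, _root_.map_mul,
      hσ]
  · simp [transvection_of_ne _ he, transvection_of_ne _ (fst_ne_of_map_letter hσ he), hσ]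

end LetterIsomorphism

section LetterAut

open FreeGroup

variable {α : Type*} [DecidableEq α]

lemma transvection_of {c d : α × Bool} (h : c.1 ≠ d.1) (i : α) : transvection c d h (of i) =
    if i = d.1 then (if d.2 then mk [c] * of i else of i * (mk [c])⁻¹) else of i := by
  change transvectionHom c d (of i) = _
  simp [transvectionHom]

lemma transvection_inv {c d : α × Bool} (h : c.1 ≠ d.1) :
    (transvection c d h)⁻¹ = transvection (bar c) d h := MulEquiv.ext fun _ => rfl

/-- The endomorphism inverting the generator `i` and fixing the others. -/
def inversionHom (i : α) : FreeGroup α →* FreeGroup α :=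
  FreeGroup.lift fun j => if j = i then (of j)⁻¹ else of j

lemma inversionHom_comp_self (i : α) :
    (inversionHom i).comp (inversionHom i) = MonoidHom.id _ := by
  ext j
  by_cases h : j = i <;> simp [inversionHom, h]

/-- The automorphism inverting the generator `i` and fixing the others. -/
def inversion (i : α) : MulAut (FreeGroup α) :=
  (inversionHom i).toMulEquiv (inversionHom i) (inversionHom_comp_self i)
    (inversionHom_comp_self i)

lemma inversion_of (i j : α) : inversion i (of j) = if j = i then (of j)⁻¹ else of j := by
  change inversionHom i (of j) = _
  simp [inversionHom]

lemma inversion_mul_self (i : α) : inversion i * inversion i = 1 := by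
  refine mulAut_ext_of fun j => ?_
  by_cases h : j = i <;> simp [inversion_of, h]

lemma inversion_letter (i : α) (c : α × Bool) :
    inversion i (mk [c]) = mk [if c.1 = i then bar c else c] := by
  obtain ⟨j, s⟩ := c
  cases s <;> by_cases h : j = i <;> simp [h, mk_false, mk_true, inversion_of]

/-- The automorphism `xᵢ ↦ xⱼ`, `xⱼ ↦ xᵢ⁻¹` fixing the other generators. -/
def rotation (i j : α) (h : i ≠ j) : MulAut (FreeGroup α) :=
  transvection (j, true) (i, true) h.symm * transvection (i, false) (j, true) h *
    transvection (j, false) (i, false) h.symm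

lemma rotation_of {i j : α} (h : i ≠ j) (k : α) : rotation i j h (of k) =
    if k = i then of j else if k = j then (of i)⁻¹ else of k := by
  rcases eq_or_ne k i with rfl | hi
  · simp [rotation, transvection_of, h, h.symm, mk_false]
  rcases eq_or_ne k j with rfl | hj
  · simp [rotation, transvection_of, h.symm, mk_false, mk_true]
  · simp [rotation, transvection_of, hi, hj]

lemma rotation_mul_inversion {i j : α} (h : i ≠ j) :
    rotation i j h * inversion j = freeGroupCongr (Equiv.swap i j) := by
  refine mulAut_ext_of fun k => ?_
  change rotation i j h (inversion j (of k)) = of (Equiv.swap i j k)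
  rw [Equiv.swap_apply_def]
  split_ifs with hi hj
  · simp [inversion_of, rotation_of, hi, h]
  · simp [inversion_of, rotation_of, hj, h.symm]
  · simp [inversion_of, rotation_of, hi, hj]

lemma rotation_mul_self {i j : α} (h : i ≠ j) :
    rotation i j h * rotation i j h = inversion i * inversion j := by
  refine mulAut_ext_of fun k => ?_
  rcases eq_or_ne k i with rfl | hi
  · simp [rotation_of, inversion_of, h, h.symm]
  rcases eq_or_ne k j with rfl | hj
  · simp [rotation_of, inversion_of, h.symm]
  · simp [rotation_of, inversion_of, hi, hj]

section NormalSubgroup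

variable (M : Subgroup (MulAut (FreeGroup α))) {c d : α × Bool} {h : c.1 ≠ d.1}
  (hM : transvection c d h ∈ M)

include hM

lemma transvection_bar_left_mem : transvection (bar c) d h ∈ M := by
  rw [← transvection_inv]
  exact inv_mem hM

variable [M.Normal]

lemma transvection_bar_right_mem : transvection c (bar d) h ∈ M := by
  have hconj := Subgroup.Normal.conj_mem ‹_› _ hM (inversion d.1)
  have hcongr := congr_transvection (inversion_letter d.1) h
  simp only [if_neg h, if_true] at hcongr
  rwa [← hcongr]

lemma transvection_mem_of_normal {c' d' : α × Bool} (h' : c'.1 ≠ d'.1) :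
    transvection c' d' h' ∈ M := by
  obtain ⟨π, hπc, hπd⟩ := MulAction.is_two_pretransitive_iff.1
    (Equiv.Perm.isMultiplyPretransitive α 2) h h'
  have hπ : transvection (π c.1, c.2) (π d.1, d.2) (π.injective.ne h) ∈ M := by
    have hconj := Subgroup.Normal.conj_mem ‹_› _ hM (freeGroupCongr π)
    have hcongr := congr_transvection (σ := freeGroupCongr π) (s := fun c => (π c.1, c.2))
      (fun _ => rfl) h
    rwa [← hcongr]
  rcases eq_or_eq_bar (c := c') (d := (π c.1, c.2)) hπc.symm with rfl | rfl <;>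
    rcases eq_or_eq_bar (c := d') (d := (π d.1, d.2)) hπd.symm with rfl | rfl
  · exact hπ
  · exact transvection_bar_right_mem M hπ
  · exact transvection_bar_left_mem M hπ
  · exact transvection_bar_left_mem M (transvection_bar_right_mem M hπ)

end NormalSubgroup

section Generation

variable {H : Subgroup (MulAut (FreeGroup α))}
  (hH : ∀ (c d : α × Bool) (h : c.1 ≠ d.1), transvection c d h ∈ H)

include hH

lemma rotation_mem {i j : α} (h : i ≠ j) : rotation i j h ∈ H :=
  mul_mem (mul_mem (hH _ _ _) (hH _ _ _)) (hH _ _ _)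

variable {i₀ : α} (hi₀ : inversion i₀ ∈ H)

include hi₀

lemma inversion_mem (i : α) : inversion i ∈ H := by
  by_cases h : i = i₀
  · rwa [h]
  · have hsq := mul_mem (rotation_mem hH h) (rotation_mem hH h)
    rw [rotation_mul_self] at hsq
    exact (mul_mem_cancel_right hi₀).1 hsq

lemma freeGroupCongr_mem [Finite α] (π : Equiv.Perm α) :
    (freeGroupCongr π : MulAut (FreeGroup α)) ∈ H := by
  induction π using Equiv.Perm.swap_induction_on with
  | one =>
    have hone : (freeGroupCongr (1 : Equiv.Perm α) : MulAut (FreeGroup α)) = 1 :=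
      mulAut_ext_of fun _ => rfl
    rw [hone]
    exact one_mem _
  | swap_mul π x y hxy ih =>
    have hmul : (freeGroupCongr (Equiv.swap x y * π) : MulAut (FreeGroup α)) =
        (rotation x y hxy * inversion y) * freeGroupCongr π := by
      rw [rotation_mul_inversion]
      exact mulAut_ext_of fun _ => rfl
    rw [hmul]
    exact mul_mem (mul_mem (rotation_mem hH _) (inversion_mem hH hi₀ _)) ih

lemma mem_of_apply_of_eq_or_eq_inv (S : Finset α) (τ : MulAut (FreeGroup α))
    (hS : ∀ i ∈ S, τ (of i) = of i ∨ τ (of i) = (of i)⁻¹) (hfix : ∀ i ∉ S, τ (of i) = of i) :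
    τ ∈ H := by
  induction S using Finset.induction_on generalizing τ with
  | empty =>
    rw [show τ = 1 from mulAut_ext_of fun i => hfix i (Finset.notMem_empty i)]
    exact one_mem _
  | insert a S ha ih =>
    rcases hS a (Finset.mem_insert_self _ _) with h | h
    · refine ih τ (fun i hi => hS i (Finset.mem_insert_of_mem hi)) fun i hi => ?_
      by_cases hia : i = a
      · rwa [hia]
      · exact hfix i (by simp [hia, hi])
    · rw [← mul_mem_cancel_right (inversion_mem hH hi₀ a)]
      refine ih _ (fun i hi => ?_) fun i hi => ?_
      · have hia : i ≠ a := ne_of_mem_of_not_mem hi ha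
        simpa [inversion_of, hia] using hS i (Finset.mem_insert_of_mem hi)
      · by_cases hia : i = a
        · simp [inversion_of, hia, h]
        · simpa [inversion_of, hia] using hfix i (by simp [hia, hi])

lemma mem_of_map_letter [Finite α] {σ : MulAut (FreeGroup α)} {s : α × Bool → α × Bool}
    (hσ : ∀ c, σ (mk [c]) = mk [s c]) : σ ∈ H := by
  have hbij : Function.Bijective fun i => (s (i, true)).1 := by
    refine Finite.injective_iff_bijective.1 fun i j hij => ?_
    by_contra hne
    exact fst_ne_of_map_letter hσ (c := (i, true)) (d := (j, true)) hne hij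
  let P : MulAut (FreeGroup α) := freeGroupCongr (Equiv.ofBijective _ hbij)
  have hP (i) : (P⁻¹ * σ) (of i) = mk [(i, (s (i, true)).2)] := by
    have hPσ : P (mk [(i, (s (i, true)).2)]) = σ (of i) := (hσ (i, true)).symm
    rw [MulAut.mul_apply, ← hPσ, MulAut.inv_apply_self]
  have hPH : P ∈ H := freeGroupCongr_mem hH hi₀ _
  rw [← mul_mem_cancel_left (inv_mem hPH)]
  cases nonempty_fintype α
  refine mem_of_apply_of_eq_or_eq_inv hH hi₀ Finset.univ _ (fun i _ => ?_) (by simp)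
  rw [hP i]
  cases (s (i, true)).2
  · exact Or.inr rfl
  · exact Or.inl rfl

theorem eq_top_of_transvection_mem_of_inversion_mem [Finite α] : H = ⊤ := by
  cases nonempty_fintype α
  refine (Subgroup.eq_top_iff' H).2 fun g => ?_
  obtain ⟨m, hm, hmin⟩ := exists_isNielsenMin H hH g
  choose s hs using hmin.exists_apply_eq_letter
  have hletter (c) : (g * m)⁻¹ (mk [c]) = mk [s c] := by rw [← hs c, MulAut.inv_apply_self]
  have hmem := mem_of_map_letter hH hi₀ hletter
  exact (mul_mem_cancel_right hm).1 (inv_mem_iff.1 hmem)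

end Generation

end LetterAut

section Det

open FreeGroup

variable {n : ℕ}

lemma coe_detρ (g : FrAut n) : (detρ n g : ℤ) = (mat g).det := rfl

lemma detρ_transvection {c d : Fin n × Bool} (h : c.1 ≠ d.1) :
    detρ n (transvection c d h) = 1 := by
  obtain ⟨a, s⟩ := c
  obtain ⟨b, t⟩ := d
  have hmat : mat (transvection (a, s) (b, t) h) =
      Matrix.transvection a b (if s = t then 1 else -1) := by
    ext i j
    simp only [mat, Matrix.of_apply, transvection_of, Matrix.transvection, Matrix.add_apply,
      Matrix.one_apply, Matrix.single_apply]
    by_cases hj : j = b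
    · cases s <;> cases t <;> by_cases ha : a = i <;>
        simp [hj, ha, expSum, mk_false, mk_true, eq_comm, add_comm]
    · simp [hj, Ne.symm hj, expSum, eq_comm]
  rw [← Units.val_inj, coe_detρ, hmat, Matrix.det_transvection_of_ne _ _ h, Units.val_one]

lemma detρ_inversion (i : Fin n) : detρ n (inversion i) = -1 := by
  have hmat : mat (inversion i) = Matrix.diagonal fun j => if j = i then (-1 : ℤ) else 1 := by
    ext k j
    simp only [mat, Matrix.of_apply, inversion_of, Matrix.diagonal_apply]
    by_cases hj : j = i <;> by_cases hk : k = j <;> simp_all [expSum, eq_comm]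
  rw [← Units.val_inj, coe_detρ, hmat, Matrix.det_diagonal]
  simp

theorem ker_detρ_le (M : Subgroup (FrAut n)) [M.Normal] {c d : Fin n × Bool} {h : c.1 ≠ d.1}
    (hM : transvection c d h ∈ M) : (detρ n).ker ≤ M := by
  let K := M ⊓ (detρ n).ker
  have hgen : K ⊔ Subgroup.zpowers (inversion c.1) = ⊤ :=
    eq_top_of_transvection_mem_of_inversion_mem
      (fun _ _ h' => Subgroup.mem_sup_left
        ⟨transvection_mem_of_normal M hM h', detρ_transvection h'⟩)
      (Subgroup.mem_sup_right (Subgroup.mem_zpowers _))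
  intro g hg
  obtain ⟨m, hm, _, ⟨k, rfl⟩, rfl⟩ :=
    Subgroup.mem_sup_of_normal_left.1 (hgen ▸ Subgroup.mem_top g)
  have hdet : (-1 : ℤˣ) ^ k = 1 := by
    simpa [show detρ n m = 1 from hm.2, detρ_inversion] using hg
  have hk : Even k := by
    by_contra hodd
    rw [(Int.not_even_iff_odd.1 hodd).neg_one_zpow] at hdet
    exact absurd hdet (by decide)
  obtain ⟨j, rfl⟩ := hk
  have hpow : inversion c.1 ^ (j + j) = 1 := by
    rw [← two_mul, _root_.zpow_mul, zpow_two, inversion_mul_self, _root_.one_zpow]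
  simpa [hpow] using hm.1

end Det

/-! ### Normal closures -/

section NormalClosure

open FreeGroup
open scoped commutatorElement

lemma commutatorElement_transvection {α : Type*} [DecidableEq α] {x a b : α} (hxa : x ≠ a)
    (hxb : x ≠ b) (hab : a ≠ b) :
    ⁅(transvection (x, false) (a, false) hxa * (transvection (x, false) (b, false) hxb)⁻¹)⁻¹,
      transvection (a, true) (b, true) hab⁆ = transvection (x, false) (b, true) hxb := by
  rw [commutatorElement_def, inv_inv, mul_inv_eq_iff_eq_mul, mul_assoc, inv_mul_eq_iff_eq_mul]
  refine mulAut_ext_of fun y => ?_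
  rcases eq_or_ne y a with rfl | hya
  · simp [transvection_inv, transvection_of, mk_false, bar, hxb, hab]
  rcases eq_or_ne y b with rfl | hyb
  · simp [transvection_inv, transvection_of, mk_false, mk_true, bar, hxa, hxb, hab, hab.symm,
      mul_assoc]
  · simp [transvection_inv, transvection_of, bar, hya, hyb]

variable {κ : Type*} [DecidableEq κ]

lemma twistedSwap_conj_transvection (i : κ) :
    (twistedSwap : MulAut (FreeGroup (Option (κ ⊕ κ)))) *
        transvection (none, false) (some (Sum.inl i), false) (by simp) * twistedSwap⁻¹ =
      transvection (none, false) (some (Sum.inr i), false) (by simp) := by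
  rw [mul_inv_eq_iff_eq_mul]
  refine mulAut_ext_of ?_
  rintro (_ | j | j)
  · simp [transvection_of, twistedSwap_of_none]
  · by_cases hj : j = i
    · simp [hj, transvection_of, twistedSwap_of_none, twistedSwap_of_inl, mk_false]
    · simp [hj, transvection_of, twistedSwap_of_inl]
  · simp [transvection_of, twistedSwap_of_inr]

lemma exists_transvection_mem_of_twistedSwap_mem [Nonempty κ]
    (M : Subgroup (MulAut (FreeGroup (Option (κ ⊕ κ))))) [M.Normal] (hM : twistedSwap ∈ M) :
    ∃ (c d : Option (κ ⊕ κ) × Bool) (h : c.1 ≠ d.1), transvection c d h ∈ M := by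
  obtain ⟨i⟩ := ‹Nonempty κ›
  have hmem (g) : g * (twistedSwap * g * twistedSwap⁻¹)⁻¹ ∈ M := by
    have hcomm : ⁅g, twistedSwap⁆ ∈ M := Subgroup.commutator_le_right ⊤ M
      (Subgroup.commutator_mem_commutator (Subgroup.mem_top g) hM)
    simpa [commutatorElement_def, mul_assoc] using hcomm
  refine ⟨(none, false), (some (Sum.inr i), true), by simp, ?_⟩
  rw [← commutatorElement_transvection (a := some (Sum.inl i)) (by simp) (by simp) (by simp),
    ← twistedSwap_conj_transvection]
  exact Subgroup.commutator_le_left M ⊤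
    (Subgroup.commutator_mem_commutator (inv_mem (hmem _)) (Subgroup.mem_top _))

end NormalClosure

section OuterAutomorphisms

variable {n : ℕ} {N : Subgroup (OutF n)}

lemma SOut_le_of_toOut_congr_twistedSwap_mem [Nontrivial (Fin n)] [N.Normal] {κ : Type*}
    (e : FreeGroup (Option (κ ⊕ κ)) ≃* FreeGroup (Fin n))
    (he : toOut n (MulAut.congr e twistedSwap) ∈ N) : SOut n ≤ N := by
  classical
  let s : Option (κ ⊕ κ) ≃ Fin n := Equiv.ofFreeGroupEquiv e
  have : Nonempty κ := by
    by_contra hκ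
    rw [not_nonempty_iff] at hκ
    exact not_subsingleton (Fin n) s.symm.injective.subsingleton
  let E := FreeGroup.freeGroupCongr s
  let M := N.comap (toOut n)
  let K := M.comap (MulAut.congr E).toMonoidHom
  have hK : twistedSwap ∈ K := by
    have hconj := Subgroup.Normal.conj_mem inferInstance _ (show _ ∈ M from he) (e.symm.trans E)
    change MulAut.congr E twistedSwap ∈ M
    convert hconj using 1
    exact MulEquiv.ext fun x => by simp
  obtain ⟨c, d, h, hcd⟩ := exists_transvection_mem_of_twistedSwap_mem K hK
  have hM : MulAut.congr E (transvection c d h) ∈ M := hcd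
  rw [congr_transvection (s := fun c => (s c.1, c.2)) fun _ => rfl] at hM
  intro x hx
  obtain ⟨g, rfl⟩ := toOut_surjective n x
  exact ker_detρ_le M hM hx

lemma eq_top_of_SOut_le (hle : SOut n ≤ N) {f : OutF n} (hf : f ∈ N) (hdet : detρOut n f = -1) :
    N = ⊤ := by
  refine (Subgroup.eq_top_iff' _).2 fun x => ?_
  rcases Int.units_eq_one_or (detρOut n x) with hx | hx
  · exact hle hx
  · refine (Subgroup.mul_mem_cancel_right _ hf).1 (hle ?_)
    rw [SOut, MonoidHom.mem_ker, _root_.map_mul, hx, hdet, neg_mul_neg, one_mul]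

end OuterAutomorphisms

/-- For `n ≥ 3`, if `f ∈ Out(F_n)` has order 2 and cannot be lifted to a finite order element
of `Aut(F_n)`, then `N(f) = SOut(F_n)` if `det ρ̄(f) = 1` and `N(f) = Out(F_n)` if
`det ρ̄(f) = -1`. -/
theorem normalClosure_order_two_out_no_finite_lift (n : ℕ) (hn : 3 ≤ n) (f : OutF n)
    (hf : orderOf f = 2)
    (hnl : ¬ ∃ h : FrAut n, IsOfFinOrder h ∧ toOut n h = f) :
    (detρOut n f = 1 → Subgroup.normalClosure {f} = SOut n) ∧
    (detρOut n f = -1 → Subgroup.normalClosure {f} = ⊤) := by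
  have : Nontrivial (Fin n) := Fin.nontrivial_iff_two_le.2 (by omega)
  obtain ⟨κ, e, he⟩ := exists_toOut_congr_twistedSwap hf hnl
  have hfN : f ∈ Subgroup.normalClosure {f} := Subgroup.subset_normalClosure rfl
  have hle : SOut n ≤ Subgroup.normalClosure {f} :=
    SOut_le_of_toOut_congr_twistedSwap_mem e (he ▸ hfN)
  refine ⟨fun hdet => le_antisymm ?_ hle, eq_top_of_SOut_le hle hfN⟩
  have : (SOut n).Normal := MonoidHom.normal_ker (detρOut n)
  exact Subgroup.normalClosure_le_normal (Set.singleton_subset_iff.2 hdet)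

end NormalClosurePaper
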